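/- Let (F_0, a) be initial data for the completion problem in ℂ^d with k ≥ d, let f : [0,∞) → [0,∞) be strictly convex, and let F = (F_0, G) ∈ C_a(F_0) be a global minimizer of P_f on C_a(F_0), with the associated data λ, μ, c_1 > … > c_p > 0, s_F, K_j, J_j. Then there exist integers 0 = s_0 < s_1 < … < s_{p−1} < s_p = s_F such that K_j = J_j = {s_{j−1}+1,…,s_j} for every j ∈ {1,…,p−1}, K_p = {s_{p−1}+1,…,s_p}, and J_p = {s_{p−1}+1,…,k}. Moreover λ + μ = (c_1·1_{s_1}, c_2·1_{s_2−s_1}, …, c_p·1_{s_p−s_{p−1}}, λ_{s_p+1},…,λ_d), where c_r = P_{s_{r−1}+1, s_r} for every r ∈ {1,…,p−1} and c_p = Q_{s_{p−1}, s_p}. -/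

import Mathlib

open Finset
open scoped ComplexOrder

noncomputable def sortAsc {m : ℕ} (x : Fin m → ℝ) : Fin m → ℝ :=
  x ∘ Tuple.sort x

noncomputable def sortDesc {m : ℕ} (x : Fin m → ℝ) : Fin m → ℝ :=
  fun i => (x ∘ Tuple.sort x) i.rev

noncomputable def pad {k : ℕ} (x : Fin k → ℝ) (m : ℕ) : Fin m → ℝ :=
  fun i => if h : (i : ℕ) < k then x ⟨i, h⟩ else 0

/-- `MajorizedBy x y` means `x ≺ y`. -/
def MajorizedBy {m : ℕ} (x y : Fin m → ℝ) : Prop :=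
  (∀ j : Fin m, ∑ i ∈ Finset.Iic j, sortDesc x i ≤ ∑ i ∈ Finset.Iic j, sortDesc y i) ∧
    ∑ i, x i = ∑ i, y i

/-- Majorization of vectors of possibly different lengths, padding with zeros. -/
def MajorizedByPad {k m : ℕ} (x : Fin k → ℝ) (y : Fin m → ℝ) : Prop :=
  MajorizedBy (pad x (max k m)) (pad y (max k m))

/-- The frame operator `S_F = ∑ f_i f_i^*` of a finite sequence of vectors in `ℂ^d`. -/
noncomputable def frameOp {d n : ℕ} (F : Fin n → Fin d → ℂ) : Matrix (Fin d) (Fin d) ℂ :=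
  ∑ l, Matrix.vecMulVec (F l) (star (F l))

/-- The squared norm `‖g‖²` of a vector in `ℂ^d`. -/
noncomputable def normSqVec {d : ℕ} (g : Fin d → ℂ) : ℝ :=
  ∑ i, Complex.normSq (g i)

open scoped Classical in
/-- Eigenvalues of a (Hermitian) matrix arranged in decreasing order. -/
noncomputable def eigsDesc {d : ℕ} (S : Matrix (Fin d) (Fin d) ℂ) : Fin d → ℝ :=
  if h : S.IsHermitian then sortDesc h.eigenvalues else 0

open scoped Classical in
/-- Eigenvalues of a (Hermitian) matrix arranged in increasing order. -/
noncomputable def eigsAsc {d : ℕ} (S : Matrix (Fin d) (Fin d) ℂ) : Fin d → ℝ :=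
  if h : S.IsHermitian then sortAsc h.eigenvalues else 0

/-- `Γ_d(a)`: non-increasing nonnegative vectors in `ℝ^d` majorizing `a`. -/
def Gamma {k : ℕ} (d : ℕ) (a : Fin k → ℝ) : Set (Fin d → ℝ) :=
  {μ | Antitone μ ∧ (∀ i, 0 ≤ μ i) ∧ MajorizedByPad a μ}

/-- The convex potential `P_f = tr f(S) = ∑ f(λ_i(S))`. -/
noncomputable def potential {d : ℕ} (f : ℝ → ℝ) (S : Matrix (Fin d) (Fin d) ℂ) : ℝ :=
  ∑ i, f (eigsDesc S i)

/-- Final averages `Q_{j,r} = (1/(r-j)) (∑_{i=j+1}^k a_i + ∑_{i=j+1}^r λ_i)` (1-based). -/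
noncomputable def finalAvg {d k : ℕ} (lam : Fin d → ℝ) (a : Fin k → ℝ) (j r : ℕ) : ℝ :=
  ((∑ i : Fin k, if j ≤ (i : ℕ) then a i else 0) +
      (∑ i : Fin d, if j ≤ (i : ℕ) ∧ (i : ℕ) < r then lam i else 0)) / ((r : ℝ) - (j : ℝ))

/-- Initial averages: `initAvg lam a lo hi = P_{lo+1,hi}` (1-based), i.e. the average of
`h_i = λ_i + a_i` over the (0-based) index window `[lo, hi)`. -/
noncomputable def initAvg {d k : ℕ} (lam : Fin d → ℝ) (a : Fin k → ℝ) (lo hi : ℕ) : ℝ :=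
  ((∑ i : Fin d, if lo ≤ (i : ℕ) ∧ (i : ℕ) < hi then lam i else 0) +
      (∑ i : Fin k, if lo ≤ (i : ℕ) ∧ (i : ℕ) < hi then a i else 0)) / ((hi : ℝ) - (lo : ℝ))

/-- 1-based access to a vector indexed by `Fin d`. -/
noncomputable def get1 {d : ℕ} (lam : Fin d → ℝ) (i : ℕ) : ℝ :=
  if h : i - 1 < d then lam ⟨i - 1, h⟩ else 0

/-- The index `s` is feasible for the pair `(λ, a)`: the unique vector
`ν_s = (c·1_{r-s}, λ_{r+1},…,λ_d)` determined by the truncated data satisfies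
`a^s ≺ ν_s - λ^s`. -/
def FeasibleIdx {d k : ℕ} (lam : Fin d → ℝ) (a : Fin k → ℝ) (s : ℕ) : Prop :=
  ∃ r : ℕ, ∃ c : ℝ, s < r ∧ r ≤ d ∧ 0 < c ∧
    (∀ i : Fin d, s ≤ (i : ℕ) → (i : ℕ) < r → lam i ≤ c) ∧
    (∀ hrd : r < d, c ≤ lam ⟨r, hrd⟩) ∧
    ((r : ℝ) - (s : ℝ)) * c =
      (∑ i : Fin d, if s ≤ (i : ℕ) ∧ (i : ℕ) < r then lam i else 0) +
        (∑ i : Fin k, if s ≤ (i : ℕ) then a i else 0) ∧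
    MajorizedByPad (fun i : Fin (k - s) => a ⟨s + (i : ℕ), by have := i.isLt; omega⟩)
      (fun i : Fin (d - s) =>
        if s + (i : ℕ) < r then c - lam ⟨s + (i : ℕ), by have := i.isLt; omega⟩ else 0)

/-!
A strictly convex potential drops strictly whenever a little mass of `S = S₀ + S_G` is moved from an
eigenspace of `S` to one with a smaller eigenvalue. At a minimizer no such move can be realized by
changing `G` at constant norms, and four ways of attempting one give the structure of `G`:
rotating two vectors `g_l, g_l'` shows that larger norms belong to larger eigenvalues of `S`;
permuting coordinates shows that `S₀` and `S_G` are diagonalized in opposite orders by one unitary;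
rotating two rows of the synthesis matrix shows that larger eigenvalues of `S_G` belong to larger
eigenvalues of `S`; and a linear relation between the vectors `g_l` of one `c_j`-eigenspace with
`j < p` would allow one to shrink them in favour of an eigenvector for a smaller eigenvalue. Hence
the `K_j` and the `J_j` are consecutive blocks, of equal size for `j < p` because the linearly
independent `g_l` with `l ∈ J_j` span the part of `range S_G` at level `c_j`. Comparing traces on
each block gives the averages.
-/

section ConvexTransfer

variable {ι : Type*} [Fintype ι] {s : Set ℝ} {f : ℝ → ℝ} {c c' : ℝ}

lemma mul_sub_lt_of_transfer (hf : StrictConvexOn ℝ s f) (hc : c ∈ s) (hc' : c' ∈ s)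
    {v β x : ℝ} (hβ : 0 ≤ β) (hx : 0 ≤ x) (hβv : β ≠ 0 → v = c) (hxv : x ≠ 0 → v = c')
    (hβlt : β < c - c') (hxlt : x < c - c') (hne : x ≠ β) :
    (c - c') * (f (v - β + x) - f v) < (x - β) * (f c - f c') := by
  have chord {y : ℝ} (h : c' < y) (h' : y < c) := hf.secant_strict_mono_aux1 hc' hc h h'
  rcases eq_or_ne β 0 with rfl | hβ0
  · rw [hxv hne, sub_zero, sub_zero]
    have := chord (y := c' + x) (by linarith [hx.lt_of_ne' hne]) (by linarith)
    linarith
  · have hx0 : x = 0 := by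
      by_contra hx0
      linarith [hβv hβ0, hxv hx0]
    rw [hβv hβ0, hx0, add_zero]
    have := chord (y := c - β) (by linarith) (by linarith [hβ.lt_of_ne' hβ0])
    linarith

/-- On the segment from `c'` to `c` a strictly convex function lies below its chord, and the chord
is affine: it does not see a transfer of mass from the level `c` to the level `c'`. -/
lemma sum_comp_transfer_lt (hf : StrictConvexOn ℝ s f) (hc : c ∈ s) (hc' : c' ∈ s)
    {ν β x : ι → ℝ} (hβ : ∀ m, 0 ≤ β m) (hx : ∀ m, 0 ≤ x m) (hβν : ∀ m, β m ≠ 0 → ν m = c)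
    (hxν : ∀ m, x m ≠ 0 → ν m = c') (hsum : ∑ m, β m = ∑ m, x m) (hpos : 0 < ∑ m, β m)
    (hlt : ∑ m, β m < c - c') :
    ∑ m, f (ν m - β m + x m) < ∑ m, f (ν m) := by
  have lt_gap {y : ι → ℝ} (hy : ∀ m, 0 ≤ y m) (h : ∑ m, y m < c - c') (m : ι) : y m < c - c' :=
    (single_le_sum (fun m _ => hy m) (mem_univ m)).trans_lt h
  have strict (m : ι) (hne : x m ≠ β m) :=
    mul_sub_lt_of_transfer hf hc hc' (hβ m) (hx m) (hβν m) (hxν m) (lt_gap hβ hlt m)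
      (lt_gap hx (hsum ▸ hlt) m) hne
  have weak (m : ι) :
      (c - c') * (f (ν m - β m + x m) - f (ν m)) ≤ (x m - β m) * (f c - f c') := by
    rcases eq_or_ne (x m) (β m) with h | h
    · simp [h]
    · exact (strict m h).le
  obtain ⟨m, -, hm⟩ := exists_ne_zero_of_sum_ne_zero hpos.ne'
  have hne : x m ≠ β m := fun h => by linarith [hβν m hm, hxν m (h ▸ hm)]
  have total : ∑ m, (c - c') * (f (ν m - β m + x m) - f (ν m)) < 0 := by
    calc _ < ∑ m, (x m - β m) * (f c - f c') :=
          sum_lt_sum (fun m _ => weak m) ⟨m, mem_univ m, strict m hne⟩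
      _ = 0 := by rw [← sum_mul, sum_sub_distrib, hsum, sub_self, zero_mul]
  rw [← mul_sum, sum_sub_distrib] at total
  exact sub_neg.1 (neg_of_mul_neg_right total (by linarith))

end ConvexTransfer

open Matrix Unitary

section JointDiagonalization

open Module

lemma exists_orthonormalBasis_joint_eigenvectors {𝕜 E n : Type*} [RCLike 𝕜]
    [NormedAddCommGroup E] [InnerProductSpace 𝕜 E] [FiniteDimensional 𝕜 E] [Fintype n]
    (hn : finrank 𝕜 E = Fintype.card n) {A B : E →ₗ[𝕜] E} (hA : A.IsSymmetric)
    (hB : B.IsSymmetric) (hAB : Commute A B) :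
    ∃ (b : OrthonormalBasis n 𝕜 E) (α β : n → ℝ),
      ∀ i, A (b i) = (α i : 𝕜) • b i ∧ B (b i) = (β i : 𝕜) • b i := by
  classical
  have internal_all := hA.directSum_isInternal_of_commute hB hAB
  have := internal_all.submodule_iSupIndep.fintypeNeBotOfFiniteDimensional
  have internal := DirectSum.isInternal_ne_bot_iff.2 internal_all
  have orth := (hA.orthogonalFamily_eigenspace_inf_eigenspace hB).comp
    (γ := {i : 𝕜 × 𝕜 // End.eigenspace A i.2 ⊓ End.eigenspace B i.1 ≠ ⊥}) Subtype.val_injective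
  let b := (internal.subordinateOrthonormalBasis hn orth).reindex (Fintype.equivFin n).symm
  have joint (i : n) : ∃ α β : ℝ, A (b i) = (α : 𝕜) • b i ∧ B (b i) = (β : 𝕜) • b i := by
    obtain ⟨hα, hβ⟩ :=
      internal.subordinateOrthonormalBasis_subordinate hn (Fintype.equivFin n i) orth
    have real {C : E →ₗ[𝕜] E} (hC : C.IsSymmetric) {z : 𝕜} (hz : b i ∈ End.eigenspace C z) :
        C (b i) = (RCLike.re z : 𝕜) • b i := by
      rw [RCLike.conj_eq_iff_re.1 (hC.conj_eigenvalue_eq_self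
        (End.hasEigenvalue_of_hasEigenvector ⟨hz, b.orthonormal.ne_zero i⟩))]
      exact End.mem_eigenspace_iff.1 hz
    exact ⟨_, _, real hA (by simpa [b] using hα), real hB (by simpa [b] using hβ)⟩
  choose α β h using joint
  exact ⟨b, α, β, h⟩

/-- The diagonal matrix with real entries `α`, as a complex matrix. -/
def realDiagonal {n : Type*} [DecidableEq n] (α : n → ℝ) : Matrix n n ℂ :=
  diagonal fun i => (α i : ℂ)

lemma realDiagonal_add {n : Type*} [DecidableEq n] (α β : n → ℝ) :
    realDiagonal α + realDiagonal β = realDiagonal (α + β) := by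
  simp [realDiagonal, diagonal_add]

variable {n : Type*} [Fintype n] [DecidableEq n]

lemma realDiagonal_mulVec_single (α : n → ℝ) (i : n) :
    realDiagonal α *ᵥ Pi.single i 1 = (α i : ℂ) • Pi.single i 1 := by
  rw [realDiagonal, diagonal_mulVec_single, ← Pi.single_smul, smul_eq_mul]

lemma exists_unitary_eq_conj_realDiagonal_of_orthonormalBasis
    (b : OrthonormalBasis n ℂ (EuclideanSpace ℂ n)) :
    ∃ U : unitaryGroup n ℂ, ∀ (A : Matrix n n ℂ) (α : n → ℝ),
      (∀ i, toEuclideanLin A (b i) = (α i : ℂ) • b i) →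
        A = conjStarAlgAut ℂ _ U (realDiagonal α) := by
  let U : unitaryGroup n ℂ := ⟨(EuclideanSpace.basisFun n ℂ).toBasis.toMatrix b.toBasis,
    (EuclideanSpace.basisFun n ℂ).toMatrix_orthonormalBasis_mem_unitary b⟩
  refine ⟨U, fun A α h => ?_⟩
  have intertwine : A * U = (U : Matrix n n ℂ) * realDiagonal α := by
    ext i j
    have := congrArg (fun v : EuclideanSpace ℂ n => v i) (h j)
    rw [realDiagonal, mul_diagonal, mul_apply]
    simpa [U, Module.Basis.toMatrix_apply, mulVec, dotProduct, mul_comm, toLpLin_apply] using this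
  rw [conjStarAlgAut_apply, ← intertwine, Matrix.mul_assoc, mul_star_self_of_mem U.2, mul_one]

lemma exists_joint_diagonalization {A B : Matrix n n ℂ} (hA : A.IsHermitian)
    (hB : B.IsHermitian) (hAB : Commute A B) :
    ∃ (U : unitaryGroup n ℂ) (α β : n → ℝ),
      A = conjStarAlgAut ℂ _ U (realDiagonal α) ∧ B = conjStarAlgAut ℂ _ U (realDiagonal β) := by
  have hcomm : Commute (toEuclideanLin A) (toEuclideanLin B) := by
    rw [commute_iff_eq]
    ext x i
    simp [toLpLin_apply, hAB.eq]
  obtain ⟨b, α, β, h⟩ := exists_orthonormalBasis_joint_eigenvectors (n := n)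
    finrank_euclideanSpace (isSymmetric_toEuclideanLin_iff.2 hA)
    (isSymmetric_toEuclideanLin_iff.2 hB) hcomm
  obtain ⟨U, hU⟩ := exists_unitary_eq_conj_realDiagonal_of_orthonormalBasis b
  exact ⟨U, α, β, hU A α fun i => (h i).1, hU B β fun i => (h i).2⟩

lemma exists_diagonalization {A : Matrix n n ℂ} (hA : A.IsHermitian) :
    ∃ (U : unitaryGroup n ℂ) (α : n → ℝ), A = conjStarAlgAut ℂ _ U (realDiagonal α) :=
  ⟨hA.eigenvectorUnitary, hA.eigenvalues, hA.spectral_theorem⟩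

end JointDiagonalization

section Eigenvalues

variable {d : ℕ}

lemma perm_ofFn_of_map_univ_eq {α : Type*} {x y : Fin d → α}
    (h : univ.val.map x = univ.val.map y) : (List.ofFn x).Perm (List.ofFn y) := by
  rw [← Multiset.coe_eq_coe]
  simpa only [Fin.univ_val_map] using h

lemma map_sortAsc_univ (x : Fin d → ℝ) : univ.val.map (sortAsc x) = univ.val.map x := by
  rw [sortAsc, ← Multiset.map_map, Multiset.map_univ_val_equiv]

lemma map_sortDesc_univ (x : Fin d → ℝ) : univ.val.map (sortDesc x) = univ.val.map x := by
  have : sortDesc x = x ∘ (Fin.revPerm.trans (Tuple.sort x)) := by ext i; simp [sortDesc]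
  rw [this, ← Multiset.map_map, Multiset.map_univ_val_equiv]

lemma monotone_sortAsc (x : Fin d → ℝ) : Monotone (sortAsc x) := Tuple.monotone_sort x

lemma antitone_sortDesc (x : Fin d → ℝ) : Antitone (sortDesc x) :=
  fun _ _ hij => Tuple.monotone_sort x (Fin.rev_le_rev.2 hij)

lemma isHermitian_realDiagonal {n : Type*} [DecidableEq n] (α : n → ℝ) :
    (realDiagonal α).IsHermitian :=
  isHermitian_diagonal_of_self_adjoint _ (by ext; simp)

lemma isHermitian_conjStarAlgAut {n : Type*} [Fintype n] [DecidableEq n] (U : unitaryGroup n ℂ)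
    {A : Matrix n n ℂ} (hA : A.IsHermitian) : (conjStarAlgAut ℂ _ U A).IsHermitian :=
  IsSelfAdjoint.map hA (conjStarAlgAut ℂ _ U)

variable (U : unitaryGroup (Fin d) ℂ) (α : Fin d → ℝ)

lemma map_eigenvalues_conj_realDiagonal (h : (conjStarAlgAut ℂ _ U (realDiagonal α)).IsHermitian) :
    univ.val.map h.eigenvalues = univ.val.map α := by
  have charpoly_eq : (conjStarAlgAut ℂ _ U (realDiagonal α)).charpoly =
      ((univ.val.map fun i => (α i : ℂ)).map fun z => Polynomial.X - Polynomial.C z).prod := by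
    rw [conjStarAlgAut_apply, charpoly_mul_comm, ← Matrix.mul_assoc, star_mul_self_of_mem U.2,
      one_mul, realDiagonal, charpoly_diagonal, Multiset.map_map]
    rfl
  have roots_eq := h.roots_charpoly_eq_eigenvalues
  rw [charpoly_eq, Polynomial.roots_multiset_prod_X_sub_C] at roots_eq
  simpa [Function.comp_def] using congrArg (Multiset.map Complex.re) roots_eq.symm

lemma eigsAsc_conj_realDiagonal {α : Fin d → ℝ} (hα : Monotone α) :
    eigsAsc (conjStarAlgAut ℂ _ U (realDiagonal α)) = α := by
  have h := isHermitian_conjStarAlgAut U (isHermitian_realDiagonal α)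
  rw [eigsAsc, dif_pos h]
  refine List.ofFn_injective <| (perm_ofFn_of_map_univ_eq ?_).eq_of_pairwise'
    (monotone_sortAsc _).sortedLE_ofFn.pairwise hα.sortedLE_ofFn.pairwise
  rw [map_sortAsc_univ, map_eigenvalues_conj_realDiagonal]

lemma map_eigsDesc_conj_realDiagonal :
    univ.val.map (eigsDesc (conjStarAlgAut ℂ _ U (realDiagonal α))) = univ.val.map α := by
  have h := isHermitian_conjStarAlgAut U (isHermitian_realDiagonal α)
  rw [eigsDesc, dif_pos h, map_sortDesc_univ, map_eigenvalues_conj_realDiagonal]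

lemma eigsDesc_conj_realDiagonal {α : Fin d → ℝ} (hα : Antitone α) :
    eigsDesc (conjStarAlgAut ℂ _ U (realDiagonal α)) = α := by
  have h := isHermitian_conjStarAlgAut U (isHermitian_realDiagonal α)
  refine List.ofFn_injective <|
    (perm_ofFn_of_map_univ_eq (map_eigsDesc_conj_realDiagonal U α)).eq_of_pairwise' ?_
      hα.sortedGE_ofFn.pairwise
  rw [eigsDesc, dif_pos h]
  exact (antitone_sortDesc _).sortedGE_ofFn.pairwise

lemma potential_conj_realDiagonal (f : ℝ → ℝ) :
    potential f (conjStarAlgAut ℂ _ U (realDiagonal α)) = ∑ i, f (α i) := by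
  have := congrArg (fun s => (s.map f).sum) (map_eigsDesc_conj_realDiagonal U α)
  simpa only [potential, Finset.sum_eq_multiset_sum, Multiset.map_map, Function.comp_def] using this

lemma potential_conjStarAlgAut (f : ℝ → ℝ) {A : Matrix (Fin d) (Fin d) ℂ} (hA : A.IsHermitian) :
    potential f (conjStarAlgAut ℂ _ U A) = potential f A := by
  obtain ⟨V, α, rfl⟩ := exists_diagonalization hA
  rw [← conjStarAlgAut_mul_apply, potential_conj_realDiagonal, potential_conj_realDiagonal]

end Eigenvalues

section MatrixTransfer

variable {n : Type*} [Fintype n]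

lemma commute_of_mul_eq_smul {S R : Matrix n n ℂ} (hS : S.IsHermitian) (hR : R.IsHermitian)
    {c : ℝ} (h : S * R = (c : ℂ) • R) : Commute S R := by
  have := congrArg conjTranspose h
  rw [conjTranspose_mul, hS.eq, hR.eq, conjTranspose_smul, hR.eq] at this
  rw [commute_iff_eq, h, this]
  simp

lemma sum_re_diag (A : Matrix n n ℂ) : ∑ m, (A m m).re = A.trace.re := by
  rw [trace, Complex.re_sum]; rfl

variable [DecidableEq n]

lemma posSemidef_conjStarAlgAut (U : unitaryGroup n ℂ) {A : Matrix n n ℂ} :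
    (conjStarAlgAut ℂ _ U A).PosSemidef ↔ A.PosSemidef := by
  rw [conjStarAlgAut_apply]
  exact IsUnit.posSemidef_star_right_conjugate_iff isUnit_coe

lemma trace_conjStarAlgAut (U : unitaryGroup n ℂ) (A : Matrix n n ℂ) :
    (conjStarAlgAut ℂ _ U A).trace = A.trace := by
  rw [conjStarAlgAut_apply, trace_mul_comm, ← Matrix.mul_assoc, star_mul_self_of_mem U.2, one_mul]

lemma eq_of_realDiagonal_mul_eq_smul {ν : n → ℝ} {A : Matrix n n ℂ} {c : ℝ}
    (h : realDiagonal ν * A = (c : ℂ) • A) {m : n} (hm : (A m m).re ≠ 0) : ν m = c := by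
  have entry := congrArg (fun M : Matrix n n ℂ => M m m) h
  have : A m m ≠ 0 := fun h0 => hm (by rw [h0, Complex.zero_re])
  simpa [realDiagonal, this] using entry

variable {s : Set ℝ} {f : ℝ → ℝ} {c c' : ℝ}

lemma sum_comp_lt_of_realDiagonal_transfer (hf : StrictConvexOn ℝ s f) (hc : c ∈ s) (hc' : c' ∈ s)
    {ν ν' : n → ℝ} {R T : Matrix n n ℂ} (hR : R.PosSemidef) (hT : T.PosSemidef)
    (hνR : realDiagonal ν * R = (c : ℂ) • R) (hνT : realDiagonal ν * T = (c' : ℂ) • T)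
    (htrace : R.trace = T.trace) (hpos : 0 < R.trace.re) (hlt : R.trace.re < c - c')
    (hν' : realDiagonal ν - R + T = realDiagonal ν') :
    ∑ m, f (ν' m) < ∑ m, f (ν m) := by
  have hdiag (m : n) : ν' m = ν m - (R m m).re + (T m m).re := by
    simpa [realDiagonal] using congrArg (fun M : Matrix n n ℂ => (M m m).re) hν'.symm
  have diag_nonneg {A : Matrix n n ℂ} (hA : A.PosSemidef) (m : n) : 0 ≤ (A m m).re :=
    (Complex.le_def.1 hA.diag_nonneg).1
  rw [← sum_re_diag] at hpos hlt
  simp only [hdiag]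
  exact sum_comp_transfer_lt hf hc hc' (diag_nonneg hR) (diag_nonneg hT)
    (fun _ => eq_of_realDiagonal_mul_eq_smul hνR) (fun _ => eq_of_realDiagonal_mul_eq_smul hνT)
    (by rw [sum_re_diag, sum_re_diag, htrace]) hpos hlt

lemma potential_sub_add_lt {d : ℕ} (hf : StrictConvexOn ℝ s f) (hc : c ∈ s) (hc' : c' ∈ s)
    {S R T : Matrix (Fin d) (Fin d) ℂ} (hS : S.IsHermitian) (hR : R.PosSemidef)
    (hT : T.PosSemidef) (hSR : S * R = (c : ℂ) • R) (hST : S * T = (c' : ℂ) • T)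
    (htrace : R.trace = T.trace) (hpos : 0 < R.trace.re) (hlt : R.trace.re < c - c') :
    potential f (S - R + T) < potential f S := by
  have hcomm : Commute S (S - R + T) :=
    ((Commute.refl S).sub_right (commute_of_mul_eq_smul hS hR.1 hSR)).add_right
      (commute_of_mul_eq_smul hS hT.1 hST)
  obtain ⟨U, ν, ν', rfl, hν'⟩ := exists_joint_diagonalization hS ((hS.sub hR.1).add hT.1) hcomm
  obtain ⟨R, rfl⟩ := EquivLike.surjective (conjStarAlgAut ℂ _ U) R
  obtain ⟨T, rfl⟩ := EquivLike.surjective (conjStarAlgAut ℂ _ U) T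
  rw [hν', potential_conj_realDiagonal, potential_conj_realDiagonal]
  rw [← map_mul, ← map_smul, EmbeddingLike.apply_eq_iff_eq] at hSR hST
  rw [← map_sub, ← map_add, EmbeddingLike.apply_eq_iff_eq] at hν'
  rw [posSemidef_conjStarAlgAut] at hR hT
  simp only [trace_conjStarAlgAut] at htrace hpos hlt
  exact sum_comp_lt_of_realDiagonal_transfer hf hc hc' hR hT hSR hST htrace hpos hlt hν'

end MatrixTransfer

section FrameOperator

variable {d k : ℕ}

lemma star_dotProduct_self (v : Fin d → ℂ) : star v ⬝ᵥ v = (normSqVec v : ℂ) := by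
  simp [normSqVec, dotProduct, Complex.normSq_eq_conj_mul_self]

lemma normSqVec_pos_iff {v : Fin d → ℂ} : 0 < normSqVec v ↔ v ≠ 0 := by
  rw [← Complex.zero_lt_real, ← star_dotProduct_self, dotProduct_star_self_pos_iff]

lemma normSqVec_smul (z : ℂ) (v : Fin d → ℂ) :
    normSqVec (z • v) = Complex.normSq z * normSqVec v := by
  simp [normSqVec, mul_sum]

lemma normSqVec_add_of_orthogonal {v w : Fin d → ℂ} (h : star v ⬝ᵥ w = 0) :
    normSqVec (v + w) = normSqVec v + normSqVec w := by
  have h' : star w ⬝ᵥ v = 0 := by rw [star_dotProduct, h, star_zero]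
  rw [← Complex.ofReal_inj, Complex.ofReal_add]
  simp only [← star_dotProduct_self, star_add, add_dotProduct, dotProduct_add, h, h', add_zero,
    zero_add]

lemma normSqVec_unitary_mulVec (U : unitaryGroup (Fin d) ℂ) (v : Fin d → ℂ) :
    normSqVec ((U : Matrix (Fin d) (Fin d) ℂ) *ᵥ v) = normSqVec v := by
  rw [← Complex.ofReal_inj, ← star_dotProduct_self, ← star_dotProduct_self, star_mulVec,
    ← dotProduct_mulVec, mulVec_mulVec, ← star_eq_conjTranspose, star_mul_self_of_mem U.2,
    one_mulVec]

lemma trace_vecMulVec_star (v : Fin d → ℂ) : (vecMulVec v (star v)).trace = normSqVec v := by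
  rw [trace_vecMulVec, dotProduct_comm, star_dotProduct_self]

lemma frameOp_posSemidef (G : Fin k → Fin d → ℂ) : (frameOp G).PosSemidef :=
  posSemidef_sum _ fun _ _ => posSemidef_vecMulVec_self_star _

lemma trace_frameOp (G : Fin k → Fin d → ℂ) :
    (frameOp G).trace = ((∑ l, normSqVec (G l) : ℝ) : ℂ) := by
  simp only [frameOp, trace_sum, trace_vecMulVec_star, Complex.ofReal_sum]

lemma frameOp_mulVec (M : Matrix (Fin d) (Fin d) ℂ) (G : Fin k → Fin d → ℂ) :
    frameOp (fun l => M *ᵥ G l) = M * frameOp G * Mᴴ := by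
  simp only [frameOp, Matrix.mul_sum, Matrix.sum_mul, mul_vecMulVec, vecMulVec_mul, star_mulVec]

lemma frameOp_unitary_mulVec (U : unitaryGroup (Fin d) ℂ) (G : Fin k → Fin d → ℂ) :
    frameOp (fun l => (U : Matrix (Fin d) (Fin d) ℂ) *ᵥ G l) =
      conjStarAlgAut ℂ _ U (frameOp G) := by
  rw [frameOp_mulVec, conjStarAlgAut_apply, star_eq_conjTranspose]

lemma frameOp_update (G : Fin k → Fin d → ℂ) (l : Fin k) (v : Fin d → ℂ) :
    frameOp (Function.update G l v) =
      frameOp G - vecMulVec (G l) (star (G l)) + vecMulVec v (star v) := by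
  have h (H : Fin k → Fin d → ℂ) :
      frameOp H = ∑ m ∈ univ.erase l, vecMulVec (H m) (star (H m)) + vecMulVec (H l) (star (H l)) :=
    (sum_erase_add _ _ (mem_univ l)).symm
  rw [h, h G, Function.update_self, add_sub_cancel_right]
  congr 1
  exact sum_congr rfl fun m hm => by rw [Function.update_of_ne (ne_of_mem_erase hm)]

end FrameOperator

section Eigenvectors

variable {n : Type*} [Fintype n] {S : Matrix n n ℂ}

lemma mul_vecMulVec_star_of_mulVec_eq {c : ℂ} {v : n → ℂ} (h : S *ᵥ v = c • v) :
    S * vecMulVec v (star v) = c • vecMulVec v (star v) := by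
  rw [mul_vecMulVec, h, smul_vecMulVec]

lemma orthogonal_of_mulVec_eq_smul (hS : S.IsHermitian) {c c' : ℝ} (hcc' : c ≠ c')
    {v w : n → ℂ} (hv : S *ᵥ v = (c : ℂ) • v) (hw : S *ᵥ w = (c' : ℂ) • w) :
    star v ⬝ᵥ w = 0 := by
  have h : (c : ℂ) * (star v ⬝ᵥ w) = c' * (star v ⬝ᵥ w) := by
    calc (c : ℂ) * (star v ⬝ᵥ w) = star (S *ᵥ v) ⬝ᵥ w := by simp [hv]
      _ = star v ⬝ᵥ (S *ᵥ w) := by rw [star_mulVec, hS.eq, dotProduct_mulVec]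
      _ = c' * (star v ⬝ᵥ w) := by rw [hw, dotProduct_smul, smul_eq_mul]
  exact (mul_eq_mul_right_iff.1 h).resolve_left (by exact_mod_cast hcc')

lemma nonneg_of_mul_eq_smul {T : Matrix n n ℂ} (hS : S.PosSemidef) (hT : T ≠ 0) {c : ℝ}
    (h : S * T = (c : ℂ) • T) : 0 ≤ c := by
  have hpos : 0 < (Tᴴ * T).trace :=
    (posSemidef_conjTranspose_mul_self T).trace_nonneg.lt_of_ne'
      (trace_conjTranspose_mul_self_eq_zero_iff.not.2 hT)
  have hnonneg := (hS.conjTranspose_mul_mul_same T).trace_nonneg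
  rw [Matrix.mul_assoc, h, Matrix.mul_smul, trace_smul, smul_eq_mul] at hnonneg
  have hre := (Complex.le_def.1 hnonneg).1
  rw [Complex.re_ofReal_mul] at hre
  exact nonneg_of_mul_nonneg_left hre (Complex.lt_def.1 hpos).1

end Eigenvectors

section Minimizers

variable {d k : ℕ} {f : ℝ → ℝ} {S₀ : Matrix (Fin d) (Fin d) ℂ} {G G' : Fin k → Fin d → ℂ}

/-- `G` minimizes the convex potential of `S₀ + frameOp G` among all sequences with the same norms:
the completions `(F₀, G)` of the paper, seen only through the frame operator `S₀` of `F₀`. -/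
def IsPotentialMinimizer (f : ℝ → ℝ) (S₀ : Matrix (Fin d) (Fin d) ℂ) (G : Fin k → Fin d → ℂ) :
    Prop :=
  ∀ G' : Fin k → Fin d → ℂ, (∀ l, normSqVec (G' l) = normSqVec (G l)) →
    potential f (S₀ + frameOp G) ≤ potential f (S₀ + frameOp G')

lemma IsPotentialMinimizer.conj (hmin : IsPotentialMinimizer f S₀ G) (hS₀ : S₀.IsHermitian)
    (U : unitaryGroup (Fin d) ℂ) :
    IsPotentialMinimizer f (conjStarAlgAut ℂ _ U S₀)
      (fun l => (U : Matrix (Fin d) (Fin d) ℂ) *ᵥ G l) := by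
  intro G' hG'
  have hpot (H : Fin k → Fin d → ℂ) :
      potential f (conjStarAlgAut ℂ _ U S₀ +
        frameOp fun l => (U : Matrix (Fin d) (Fin d) ℂ) *ᵥ H l) = potential f (S₀ + frameOp H) := by
    rw [frameOp_unitary_mulVec, ← map_add,
      potential_conjStarAlgAut U f (hS₀.add (frameOp_posSemidef H).1)]
  have cancel (l : Fin k) : (U : Matrix (Fin d) (Fin d) ℂ) *ᵥ
      ((star U : unitaryGroup (Fin d) ℂ) : Matrix (Fin d) (Fin d) ℂ) *ᵥ G' l = G' l := by
    rw [mulVec_mulVec, coe_star, mul_star_self_of_mem U.2, one_mulVec]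
  have := hmin (fun l => ((star U : unitaryGroup (Fin d) ℂ) : Matrix (Fin d) (Fin d) ℂ) *ᵥ G' l)
    fun l => by rw [normSqVec_unitary_mulVec, hG', normSqVec_unitary_mulVec]
  rw [hpot G]
  refine this.trans_eq ?_
  rw [← hpot]
  simp only [cancel]

lemma IsPotentialMinimizer.not_transfer (hmin : IsPotentialMinimizer f S₀ G)
    (hf : StrictConvexOn ℝ (Set.Ici 0) f) (hS₀ : S₀.PosSemidef) {c c' : ℝ}
    {R T : Matrix (Fin d) (Fin d) ℂ} (hR : R.PosSemidef) (hT : T.PosSemidef)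
    (hSR : (S₀ + frameOp G) * R = (c : ℂ) • R) (hST : (S₀ + frameOp G) * T = (c' : ℂ) • T)
    (hpos : 0 < T.trace.re) (hlt : T.trace.re < c - c')
    (hnorm : ∀ l, normSqVec (G' l) = normSqVec (G l)) : frameOp G' ≠ frameOp G - R + T := by
  intro hG'
  have hS : (S₀ + frameOp G).PosSemidef := hS₀.add (frameOp_posSemidef G)
  have htrace : R.trace = T.trace := by
    have := congrArg trace hG'
    simp only [trace_add, trace_sub, trace_frameOp, hnorm] at this
    linear_combination this
  have hT0 : T ≠ 0 := by
    rintro rfl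
    simp at hpos
  have hc' : 0 ≤ c' := nonneg_of_mul_eq_smul hS hT0 hST
  have hlt' := potential_sub_add_lt hf (Set.mem_Ici.2 (by linarith)) (Set.mem_Ici.2 hc') hS.1 hR hT
    hSR hST htrace (htrace ▸ hpos) (htrace ▸ hlt)
  rw [show S₀ + frameOp G - R + T = S₀ + frameOp G' by rw [hG']; abel] at hlt'
  exact (hmin G' hnorm).not_gt hlt'

end Minimizers

section TwoLevelTransfer

variable {d k : ℕ}

/-- The 2 × 2 Schur–Horn theorem: a rotation followed by a diagonal scaling. -/
lemma exists_two_by_two_of_le {a a' ε : ℝ} (haa' : a ≤ a') (hε : 0 < ε) (hεa : ε ≤ a) :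
    ∃ p q r s : ℝ, p ^ 2 + q ^ 2 = a - ε ∧ r ^ 2 + s ^ 2 = a' + ε ∧ p * r + q * s = 0 ∧
      p ^ 2 + r ^ 2 = a ∧ q ^ 2 + s ^ 2 = a' := by
  obtain ⟨D, rfl⟩ : ∃ D, a' = D + a - 2 * ε := ⟨a' - a + 2 * ε, by ring⟩
  have hDpos : 0 < D := by linarith
  have hA := Real.sq_sqrt (show 0 ≤ a - ε by linarith)
  have hB := Real.sq_sqrt (show 0 ≤ D + a - 2 * ε + ε by linarith)
  have hC := Real.sq_sqrt (show 0 ≤ (D - ε) / D from div_nonneg (by linarith) hDpos.le)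
  have hE := Real.sq_sqrt (show 0 ≤ ε / D by positivity)
  refine ⟨√(a - ε) * √((D - ε) / D), -(√(a - ε) * √(ε / D)), √(D + a - 2 * ε + ε) * √(ε / D),
    √(D + a - 2 * ε + ε) * √((D - ε) / D), ?_, ?_, by ring, ?_, ?_⟩ <;>
    (simp only [mul_pow, neg_sq, hA, hB, hC, hE]; field_simp; ring)

lemma frameOp_update_update {G : Fin k → Fin d → ℂ} {l l' : Fin k} (hll' : l ≠ l')
    {u u' : Fin d → ℂ} {a a' ε p q r s : ℝ}
    (hl : vecMulVec (G l) (star (G l)) = (a : ℂ) • vecMulVec u (star u))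
    (hl' : vecMulVec (G l') (star (G l')) = (a' : ℂ) • vecMulVec u' (star u'))
    (hpq : p ^ 2 + q ^ 2 = a - ε) (hrs : r ^ 2 + s ^ 2 = a' + ε) (horth : p * r + q * s = 0) :
    frameOp (Function.update (Function.update G l ((p : ℂ) • u + (r : ℂ) • u')) l'
        ((q : ℂ) • u + (s : ℂ) • u')) =
      frameOp G - (ε : ℂ) • vecMulVec u (star u) + (ε : ℂ) • vecMulVec u' (star u') := by
  rw [frameOp_update, frameOp_update, Function.update_of_ne hll'.symm, hl, hl']
  have hpq' : (p : ℂ) ^ 2 + q ^ 2 = a - ε := by exact_mod_cast hpq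
  have hrs' : (r : ℂ) ^ 2 + s ^ 2 = a' + ε := by exact_mod_cast hrs
  have horth' : (p : ℂ) * r + q * s = 0 := by exact_mod_cast horth
  ext m n
  simp only [Matrix.add_apply, Matrix.sub_apply, Matrix.smul_apply, vecMulVec_apply, Pi.add_apply,
    Pi.smul_apply, Pi.star_apply, star_add, star_smul, smul_eq_mul, Complex.star_def,
    Complex.conj_ofReal]
  linear_combination (u m * starRingEnd ℂ (u n)) * hpq' + (u' m * starRingEnd ℂ (u' n)) * hrs' +
    (u m * starRingEnd ℂ (u' n) + u' m * starRingEnd ℂ (u n)) * horth'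

lemma normSqVec_smul_add_smul {u u' : Fin d → ℂ} (hu : normSqVec u = 1) (hu' : normSqVec u' = 1)
    (horth : star u ⬝ᵥ u' = 0) (p r : ℝ) :
    normSqVec ((p : ℂ) • u + (r : ℂ) • u') = p ^ 2 + r ^ 2 := by
  rw [normSqVec_add_of_orthogonal (by simp [horth]), normSqVec_smul, normSqVec_smul, hu, hu',
    Complex.normSq_ofReal, Complex.normSq_ofReal]
  ring

end TwoLevelTransfer

section NormsOrderedByEigenvalues

variable {d k : ℕ} {f : ℝ → ℝ} {S₀ : Matrix (Fin d) (Fin d) ℂ} {G G' : Fin k → Fin d → ℂ}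
  {c c' : ℝ}

lemma vecMulVec_smul_star (z : ℂ) (v : Fin d → ℂ) :
    vecMulVec (z • v) (star (z • v)) = (Complex.normSq z : ℂ) • vecMulVec v (star v) := by
  rw [star_smul, smul_vecMulVec, vecMulVec_smul, smul_smul, Complex.star_def, Complex.mul_conj]

lemma exists_unit_eigenvector {S : Matrix (Fin d) (Fin d) ℂ} {v : Fin d → ℂ} (hv : v ≠ 0)
    (hSv : S *ᵥ v = (c : ℂ) • v) :
    ∃ u, normSqVec u = 1 ∧ S *ᵥ u = (c : ℂ) • u ∧
      vecMulVec v (star v) = (normSqVec v : ℂ) • vecMulVec u (star u) := by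
  have hpos := normSqVec_pos_iff.2 hv
  have hz : Complex.normSq ((√(normSqVec v) : ℝ) : ℂ) = normSqVec v := by
    rw [Complex.normSq_ofReal, Real.mul_self_sqrt hpos.le]
  refine ⟨((√(normSqVec v) : ℝ) : ℂ)⁻¹ • v, ?_, by rw [mulVec_smul, hSv, smul_comm], ?_⟩
  · rw [normSqVec_smul, map_inv₀, hz, inv_mul_cancel₀ hpos.ne']
  · rw [vecMulVec_smul_star, map_inv₀, hz, Complex.ofReal_inv,
      smul_inv_smul₀ (Complex.ofReal_ne_zero.2 hpos.ne')]

lemma IsPotentialMinimizer.not_transfer_of_mulVec (hmin : IsPotentialMinimizer f S₀ G)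
    (hf : StrictConvexOn ℝ (Set.Ici 0) f) (hS₀ : S₀.PosSemidef) {u u' : Fin d → ℂ}
    (hSu : (S₀ + frameOp G) *ᵥ u = (c : ℂ) • u) (hu' : normSqVec u' = 1)
    (hSu' : (S₀ + frameOp G) *ᵥ u' = (c' : ℂ) • u') {ε : ℝ} (hε : 0 < ε) (hlt : ε < c - c')
    (hnorm : ∀ l, normSqVec (G' l) = normSqVec (G l)) :
    frameOp G' ≠
      frameOp G - (ε : ℂ) • vecMulVec u (star u) + (ε : ℂ) • vecMulVec u' (star u') := by
  have htrace : ((ε : ℂ) • vecMulVec u' (star u')).trace.re = ε := by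
    rw [trace_smul, trace_vecMulVec_star, hu']
    simp
  have hεc : (0 : ℂ) ≤ ε := by exact_mod_cast hε.le
  refine hmin.not_transfer hf hS₀ ((posSemidef_vecMulVec_self_star u).smul hεc)
    ((posSemidef_vecMulVec_self_star u').smul hεc) (c := c) (c' := c') ?_ ?_ (by rwa [htrace])
    (by rwa [htrace]) hnorm
  · rw [Matrix.mul_smul, mul_vecMulVec_star_of_mulVec_eq hSu, smul_comm]
  · rw [Matrix.mul_smul, mul_vecMulVec_star_of_mulVec_eq hSu', smul_comm]

theorem IsPotentialMinimizer.normSqVec_lt_of_eigenvalue_lt (hmin : IsPotentialMinimizer f S₀ G)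
    (hf : StrictConvexOn ℝ (Set.Ici 0) f) (hS₀ : S₀.PosSemidef) (hcc' : c' < c) {l l' : Fin k}
    (hl : (S₀ + frameOp G) *ᵥ G l = (c : ℂ) • G l)
    (hl' : (S₀ + frameOp G) *ᵥ G l' = (c' : ℂ) • G l') (hGl : G l ≠ 0) :
    normSqVec (G l') < normSqVec (G l) := by
  by_contra! hle
  have hll' : l ≠ l' := by
    rintro rfl
    have hcc := smul_left_injective ℂ hGl (hl.symm.trans hl')
    exact hcc'.ne' (Complex.ofReal_inj.1 hcc)
  have ha := normSqVec_pos_iff.2 hGl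
  obtain ⟨ε, hε, hlt⟩ := exists_between (lt_min ha (sub_pos.2 hcc'))
  obtain ⟨hεa, hεc⟩ := lt_min_iff.1 hlt
  obtain ⟨u, hu, hSu, hGu⟩ := exists_unit_eigenvector hGl hl
  obtain ⟨u', hu', hSu', hGu'⟩ :=
    exists_unit_eigenvector (normSqVec_pos_iff.1 (ha.trans_le hle)) hl'
  have horth := orthogonal_of_mulVec_eq_smul (hS₀.add (frameOp_posSemidef G)).1 hcc'.ne' hSu hSu'
  obtain ⟨p, q, r, s, hpq, hrs, hpqrs, hpr, hqs⟩ := exists_two_by_two_of_le hle hε hεa.le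
  refine hmin.not_transfer_of_mulVec hf hS₀ hSu hu' hSu' hε hεc (fun m => ?_)
    (frameOp_update_update hll' hGu hGu' hpq hrs hpqrs)
  rcases eq_or_ne m l' with rfl | hml'
  · rw [Function.update_self, normSqVec_smul_add_smul hu hu' horth, hqs]
  rw [Function.update_of_ne hml']
  rcases eq_or_ne m l with rfl | hml
  · rw [Function.update_self, normSqVec_smul_add_smul hu hu' horth, hpr]
  · rw [Function.update_of_ne hml]

end NormsOrderedByEigenvalues

section FrameWeightsOrderedByEigenvalues

variable {d k : ℕ} {f : ℝ → ℝ} {S₀ : Matrix (Fin d) (Fin d) ℂ} {G : Fin k → Fin d → ℂ}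
  {μ ν : Fin d → ℝ}

lemma nonneg_of_frameOp_eq_realDiagonal (hG : frameOp G = realDiagonal μ) (q : Fin d) :
    0 ≤ μ q := by
  have := (frameOp_posSemidef G).diag_nonneg (i := q)
  rw [hG, realDiagonal, diagonal_apply_eq] at this
  exact_mod_cast this

lemma frameOp_sum_smul (hG : frameOp G = realDiagonal μ) (C : Fin d → Fin d → ℂ) :
    frameOp (fun l => ∑ q, G l q • C q) = frameOp fun q => ((√(μ q) : ℝ) : ℂ) • C q := by
  have hsum (l : Fin k) : ∑ q, G l q • C q = (of C)ᵀ *ᵥ G l := by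
    rw [mulVec_transpose, vecMul_eq_sum]; rfl
  simp only [hsum]
  rw [frameOp_mulVec, hG, frameOp]
  simp only [vecMulVec_smul_star, Complex.normSq_ofReal,
    Real.mul_self_sqrt (nonneg_of_frameOp_eq_realDiagonal hG _)]
  ext m n
  rw [Matrix.mul_apply]
  simp only [realDiagonal, mul_diagonal, Matrix.sum_apply, Matrix.smul_apply, vecMulVec_apply,
    transpose_apply, conjTranspose_apply, of_apply, Pi.star_apply, smul_eq_mul]
  exact sum_congr rfl fun q _ => by ring

lemma eq_of_realDiagonal_mulVec_eq_smul {v : Fin d → ℂ} {c : ℝ}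
    (h : realDiagonal ν *ᵥ v = (c : ℂ) • v) {m : Fin d} (hm : v m ≠ 0) : ν m = c := by
  have entry := congrFun h m
  rw [realDiagonal, mulVec_diagonal, Pi.smul_apply, smul_eq_mul] at entry
  exact_mod_cast mul_right_cancel₀ hm entry

lemma normSqVec_single (i : Fin d) : normSqVec (Pi.single i 1 : Fin d → ℂ) = 1 := by
  simp [normSqVec, Pi.single_apply, apply_ite]

lemma exists_normSqVec_eq_one_sqrt_smul_eq {i i' : Fin d} (hii' : i ≠ i') {a α β : ℝ} (ha : 0 < a)
    (hαβ : α ^ 2 + β ^ 2 = a) :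
    ∃ x : Fin d → ℂ, normSqVec x = 1 ∧ (∀ m, m ≠ i → m ≠ i' → x m = 0) ∧
      ((√a : ℝ) : ℂ) • x = (α : ℂ) • Pi.single i 1 + (β : ℂ) • Pi.single i' 1 := by
  have ha0 : ((√a : ℝ) : ℂ) ≠ 0 := by exact_mod_cast (Real.sqrt_pos.2 ha).ne'
  refine ⟨((√a : ℝ) : ℂ)⁻¹ • ((α : ℂ) • Pi.single i 1 + (β : ℂ) • Pi.single i' 1), ?_,
    fun m hm hm' => by simp [hm, hm'], smul_inv_smul₀ ha0 _⟩
  rw [normSqVec_smul, normSqVec_smul_add_smul (normSqVec_single i) (normSqVec_single i')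
    (by simp [hii']), hαβ, map_inv₀, Complex.normSq_ofReal, Real.mul_self_sqrt ha.le,
    inv_mul_cancel₀ ha.ne']

lemma normSqVec_update_zero_add_smul {v x : Fin d → ℂ} {i i' : Fin d} (hv : v i' = 0)
    (hx : ∀ m, m ≠ i → m ≠ i' → x m = 0) (hx1 : normSqVec x = 1) :
    normSqVec (Function.update v i 0 + v i • x) =
      normSqVec (Function.update v i 0) + Complex.normSq (v i) := by
  have horth : star (Function.update v i 0) ⬝ᵥ x = 0 := sum_eq_zero fun m _ => by
    by_cases hm : m = i
    · simp [hm]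
    by_cases hm' : m = i'
    · simp [hm', hv, Function.update_apply]
    rw [hx m hm hm', mul_zero]
  rw [normSqVec_add_of_orthogonal (by rw [dotProduct_smul, horth, smul_zero]), normSqVec_smul, hx1,
    mul_one]

/-- The standard basis of `ℂ^d` with the vectors of index `i` and `i'` replaced by `x` and `x'`:
the columns of the matrices used to transfer weight between two rows of a frame. -/
def replacedBasis (i i' : Fin d) (x x' : Fin d → ℂ) : Fin d → Fin d → ℂ :=
  Function.update (Function.update (fun m => Pi.single m 1) i x) i' x'

lemma replacedBasis_comm {i i' : Fin d} (hii' : i ≠ i') (x x' : Fin d → ℂ) :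
    replacedBasis i i' x x' = replacedBasis i' i x' x :=
  Function.update_comm hii' ..

lemma normSqVec_sum_smul_replacedBasis {v x : Fin d → ℂ} {i i' : Fin d} (hii' : i ≠ i')
    (hv : v i' = 0) (hx : ∀ m, m ≠ i → m ≠ i' → x m = 0) (hx1 : normSqVec x = 1)
    (x' : Fin d → ℂ) : normSqVec (∑ m, v m • replacedBasis i i' x x' m) = normSqVec v := by
  have hsum : ∑ m, v m • replacedBasis i i' x x' m = Function.update v i 0 + v i • x := by
    conv_rhs => rw [pi_eq_sum_univ' (Function.update v i 0)]
    rw [← Fintype.sum_ite_eq i (fun m => v m • x), ← sum_add_distrib]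
    refine sum_congr rfl fun m _ => ?_
    rcases eq_or_ne m i' with rfl | hm'
    · simp [replacedBasis, hv, hii', hii'.symm]
    rcases eq_or_ne m i with rfl | hm
    · simp [replacedBasis, hm']
    · simp [replacedBasis, hm, hm', hm.symm]
  have hself : Function.update v i 0 + v i • Pi.single i 1 = v := by
    ext m
    rcases eq_or_ne m i with rfl | hm <;> simp [*]
  conv_rhs => rw [← hself]
  rw [hsum, normSqVec_update_zero_add_smul hv hx hx1, normSqVec_update_zero_add_smul hv
    (fun m hm _ => Pi.single_eq_of_ne hm _) (normSqVec_single i)]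

lemma frameOp_sum_smul_replacedBasis (hμ : frameOp G = realDiagonal μ) {i i' : Fin d}
    (hii' : i ≠ i') {x x' : Fin d → ℂ} {ε p q r s : ℝ}
    (hx : ((√(μ i) : ℝ) : ℂ) • x = (p : ℂ) • Pi.single i 1 + (r : ℂ) • Pi.single i' 1)
    (hx' : ((√(μ i') : ℝ) : ℂ) • x' = (q : ℂ) • Pi.single i 1 + (s : ℂ) • Pi.single i' 1)
    (hpq : p ^ 2 + q ^ 2 = μ i - ε) (hrs : r ^ 2 + s ^ 2 = μ i' + ε) (horth : p * r + q * s = 0) :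
    frameOp (fun l => ∑ m, G l m • replacedBasis i i' x x' m) =
      frameOp G - (ε : ℂ) • vecMulVec (Pi.single i 1) (star (Pi.single i 1)) +
        (ε : ℂ) • vecMulVec (Pi.single i' 1) (star (Pi.single i' 1)) := by
  set E : Fin d → Fin d → ℂ := fun m => ((√(μ m) : ℝ) : ℂ) • Pi.single m 1
  have hE (m : Fin d) : vecMulVec (E m) (star (E m)) =
      (μ m : ℂ) • vecMulVec (Pi.single m 1) (star (Pi.single m 1)) := by
    rw [vecMulVec_smul_star, Complex.normSq_ofReal,
      Real.mul_self_sqrt (nonneg_of_frameOp_eq_realDiagonal hμ m)]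
  have hGE : frameOp G = frameOp E := by
    rw [← frameOp_sum_smul hμ]
    simp only [← pi_eq_sum_univ']
  have hreplaced : (fun m => ((√(μ m) : ℝ) : ℂ) • replacedBasis i i' x x' m) =
      Function.update (Function.update E i ((p : ℂ) • Pi.single i 1 + (r : ℂ) • Pi.single i' 1)) i'
        ((q : ℂ) • Pi.single i 1 + (s : ℂ) • Pi.single i' 1) := by
    funext m
    rcases eq_or_ne m i' with rfl | hm'
    · simp only [replacedBasis, Function.update_self, hx']
    rcases eq_or_ne m i with rfl | hm
    · simp only [replacedBasis, Function.update_of_ne hm', Function.update_self, hx]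
    · simp only [replacedBasis, Function.update_of_ne hm', Function.update_of_ne hm, E]
  rw [frameOp_sum_smul hμ, hreplaced, frameOp_update_update hii' (hE i) (hE i') hpq hrs horth, hGE]

theorem IsPotentialMinimizer.weight_lt_of_eigenvalue_lt (hmin : IsPotentialMinimizer f S₀ G)
    (hf : StrictConvexOn ℝ (Set.Ici 0) f) (hS₀ : S₀.PosSemidef) (hμ : frameOp G = realDiagonal μ)
    (hν : S₀ + frameOp G = realDiagonal ν)
    (hG : ∀ l, ∃ c : ℝ, (S₀ + frameOp G) *ᵥ G l = (c : ℂ) • G l) {i i' : Fin d}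
    (hlt : ν i' < ν i) (hi : 0 < μ i) : μ i' < μ i := by
  by_contra! hle
  have hii' : i ≠ i' := by rintro rfl; exact hlt.false
  obtain ⟨ε, hε, hεlt⟩ := exists_between (lt_min hi (sub_pos.2 hlt))
  obtain ⟨hεμ, hεν⟩ := lt_min_iff.1 hεlt
  obtain ⟨p, q, r, s, hpq, hrs, hpqrs, hpr, hqs⟩ := exists_two_by_two_of_le hle hε hεμ.le
  have hS (m : Fin d) : (S₀ + frameOp G) *ᵥ Pi.single m 1 = (ν m : ℂ) • Pi.single m 1 := by
    rw [hν, realDiagonal_mulVec_single]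
  obtain ⟨x, hx1, hx0, hx⟩ := exists_normSqVec_eq_one_sqrt_smul_eq hii' hi hpr
  obtain ⟨x', hx1', hx0', hx'⟩ :=
    exists_normSqVec_eq_one_sqrt_smul_eq hii' (hi.trans_le hle) hqs
  refine hmin.not_transfer_of_mulVec hf hS₀ (hS i) (normSqVec_single i') (hS i') hε hεν
    (fun l => ?_) (frameOp_sum_smul_replacedBasis hμ hii' hx hx' hpq hrs hpqrs)
  have hzero : G l i' = 0 ∨ G l i = 0 := by
    obtain ⟨c, hc⟩ := hG l
    by_contra! h
    have eq_of_ne {m : Fin d} (hm : G l m ≠ 0) : ν m = c :=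
      eq_of_realDiagonal_mulVec_eq_smul (hν ▸ hc) hm
    exact hlt.ne ((eq_of_ne h.1).trans (eq_of_ne h.2).symm)
  rcases hzero with h | h
  · exact normSqVec_sum_smul_replacedBasis hii' h hx0 hx1 x'
  · rw [replacedBasis_comm hii']
    exact normSqVec_sum_smul_replacedBasis hii'.symm h (fun m h h' => hx0' m h' h) hx1' x

end FrameWeightsOrderedByEigenvalues

section LinearIndependence

variable {d k : ℕ} {f : ℝ → ℝ} {S₀ : Matrix (Fin d) (Fin d) ℂ} {G : Fin k → Fin d → ℂ}
  {c c' : ℝ}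

-- `C = cos φ` and `‖u‖ = √a sin φ`, where the constraint `C * u = ζ` prescribes `sin 2φ`.
lemma exists_sq_mul_add_normSq_eq {a : ℝ} (ha : 0 < a) {ζ : ℂ} (hζ : 4 * Complex.normSq ζ ≤ a) :
    ∃ (C : ℝ) (u : ℂ), C ^ 2 * a + Complex.normSq u = a ∧ C * u = ζ ∧
      Complex.normSq u ≤ 2 * Complex.normSq ζ := by
  set θ := √(1 - 4 * Complex.normSq ζ / a)
  have hθ0 : 0 ≤ θ := Real.sqrt_nonneg _
  have hθ : θ ^ 2 = 1 - 4 * Complex.normSq ζ / a :=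
    Real.sq_sqrt (sub_nonneg.2 ((div_le_one ha).2 hζ))
  have hC : √((1 + θ) / 2) ^ 2 = (1 + θ) / 2 := Real.sq_sqrt (by positivity)
  have hC0 : (√((1 + θ) / 2) : ℂ) ≠ 0 := by exact_mod_cast (Real.sqrt_pos.2 (by positivity)).ne'
  have hu : Complex.normSq (ζ / √((1 + θ) / 2)) = Complex.normSq ζ / ((1 + θ) / 2) := by
    rw [Complex.normSq_div, Complex.normSq_ofReal, ← sq, hC]
  refine ⟨√((1 + θ) / 2), ζ / √((1 + θ) / 2), ?_, mul_div_cancel₀ _ hC0, ?_⟩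
  · rw [hu, hC]
    field_simp at hθ ⊢
    linear_combination hθ
  · rw [hu, div_le_iff₀ (by positivity)]
    nlinarith [Complex.normSq_nonneg ζ]

lemma exists_pos_forall_sq_mul_le {ι : Type*} [Fintype ι] {a b : ι → ℝ} (ha : ∀ l, 0 < a l)
    {δ : ℝ} (hδ : 0 < δ) :
    ∃ t : ℝ, 0 < t ∧ (∀ l, t ^ 2 * b l ≤ a l) ∧ t ^ 2 * ∑ l, b l < δ := by
  have htendsto (y : ℝ) : Filter.Tendsto (fun t : ℝ => t ^ 2 * y) (nhdsWithin 0 (Set.Ioi 0))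
      (nhds 0) :=
    ((by fun_prop : Continuous fun t : ℝ => t ^ 2 * y).tendsto' 0 0 (by simp)).mono_left
      nhdsWithin_le_nhds
  have hall := Filter.eventually_all.2 fun l => (htendsto (b l)).eventually (Iio_mem_nhds (ha l))
  obtain ⟨t, ht, htb, hsum⟩ := (Filter.Eventually.and eventually_mem_nhdsWithin
    (hall.and ((htendsto (∑ l, b l)).eventually (Iio_mem_nhds hδ)))).exists
  exact ⟨t, ht, fun l => (htb l).le, hsum⟩

lemma frameOp_smul_add_smul {C : Fin k → ℝ} {u : Fin k → ℂ}
    (hcross : ∑ l, ((C l : ℂ) * star (u l)) • G l = 0) (w : Fin d → ℂ) :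
    frameOp (fun l => (C l : ℂ) • G l + u l • w) =
      frameOp G - ∑ l, ((1 - C l ^ 2 : ℝ) : ℂ) • vecMulVec (G l) (star (G l)) +
        ((∑ l, Complex.normSq (u l) : ℝ) : ℂ) • vecMulVec w (star w) := by
  have hterm (l : Fin k) :
      vecMulVec ((C l : ℂ) • G l + u l • w) (star ((C l : ℂ) • G l + u l • w)) =
      vecMulVec (G l) (star (G l)) - ((1 - C l ^ 2 : ℝ) : ℂ) • vecMulVec (G l) (star (G l)) +
        (Complex.normSq (u l) : ℂ) • vecMulVec w (star w) +
        (vecMulVec (((C l : ℂ) * star (u l)) • G l) (star w) +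
          vecMulVec w (star (((C l : ℂ) * star (u l)) • G l))) := by
    ext m n
    simp [vecMulVec_apply, Complex.normSq_eq_conj_mul_self]
    ring
  have hcross_left : ∑ l, vecMulVec (((C l : ℂ) * star (u l)) • G l) (star w) = 0 := by
    ext m n
    have := congrFun hcross m
    rw [Finset.sum_apply] at this
    simp only [Matrix.sum_apply, vecMulVec_apply, ← sum_mul, this, Pi.zero_apply, zero_mul,
      Matrix.zero_apply]
  have hcross_right : ∑ l, vecMulVec w (star (((C l : ℂ) * star (u l)) • G l)) = 0 := by
    rw [← conjTranspose_zero, ← hcross_left, conjTranspose_sum]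
    exact sum_congr rfl fun l _ => by rw [conjTranspose_vecMulVec, star_star]
  simp only [frameOp, hterm, sum_add_distrib, sum_sub_distrib, hcross_left, hcross_right, add_zero,
    Complex.ofReal_sum, sum_smul]

lemma IsPotentialMinimizer.eq_zero_of_smul_add_smul (hmin : IsPotentialMinimizer f S₀ G)
    (hf : StrictConvexOn ℝ (Set.Ici 0) f) (hS₀ : S₀.PosSemidef) (hcc' : c' < c)
    {w : Fin d → ℂ} (hw1 : normSqVec w = 1) (hSw : (S₀ + frameOp G) *ᵥ w = (c' : ℂ) • w)
    (hG : ∀ l, G l ≠ 0) {C : Fin k → ℝ} {u : Fin k → ℂ}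
    (hCu : ∀ l, C l ^ 2 * normSqVec (G l) + Complex.normSq (u l) = normSqVec (G l))
    (hSG : ∀ l, u l ≠ 0 → (S₀ + frameOp G) *ᵥ G l = (c : ℂ) • G l)
    (hcross : ∑ l, ((C l : ℂ) * star (u l)) • G l = 0)
    (hlt : ∑ l, Complex.normSq (u l) < c - c') (l : Fin k) : u l = 0 := by
  by_contra hul
  have hS := hS₀.add (frameOp_posSemidef G)
  have htrace : (((∑ l, Complex.normSq (u l) : ℝ) : ℂ) • vecMulVec w (star w)).trace.re =
      ∑ l, Complex.normSq (u l) := by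
    rw [trace_smul, trace_vecMulVec_star, hw1, Complex.ofReal_one, smul_eq_mul, mul_one,
      Complex.ofReal_re]
  have hnorm (l : Fin k) : normSqVec ((C l : ℂ) • G l + u l • w) = normSqVec (G l) := by
    have horth : star ((C l : ℂ) • G l) ⬝ᵥ (u l • w) = 0 := by
      by_cases hl : u l = 0
      · rw [hl, zero_smul, dotProduct_zero]
      · rw [star_smul, smul_dotProduct, dotProduct_smul,
          orthogonal_of_mulVec_eq_smul hS.1 hcc'.ne' (hSG l hl) hSw, smul_zero, smul_zero]
    rw [normSqVec_add_of_orthogonal horth, normSqVec_smul, normSqVec_smul, hw1, mul_one,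
      Complex.normSq_ofReal, ← sq, hCu]
  refine hmin.not_transfer hf hS₀ (c := c) (c' := c') (posSemidef_sum _ fun l _ => ?_)
    ((posSemidef_vecMulVec_self_star w).smul ?_) ?_ ?_ ?_ (by rwa [htrace]) hnorm
    (frameOp_smul_add_smul hcross w)
  · refine (posSemidef_vecMulVec_self_star _).smul (Complex.zero_le_real.2 (sub_nonneg.2 ?_))
    nlinarith [hCu l, normSqVec_pos_iff.2 (hG l), Complex.normSq_nonneg (u l)]
  · exact Complex.zero_le_real.2 (sum_nonneg fun l _ => Complex.normSq_nonneg _)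
  · rw [Matrix.mul_sum, smul_sum]
    refine sum_congr rfl fun l _ => ?_
    by_cases hl : u l = 0
    · have hC : C l ^ 2 = 1 := by
        simpa [hl, (normSqVec_pos_iff.2 (hG l)).ne'] using hCu l
      simp [hC]
    · rw [Matrix.mul_smul, mul_vecMulVec_star_of_mulVec_eq (hSG l hl), smul_comm]
  · rw [Matrix.mul_smul, mul_vecMulVec_star_of_mulVec_eq hSw, smul_comm]
  · rw [htrace]
    exact sum_pos' (fun l _ => Complex.normSq_nonneg _) ⟨l, mem_univ l, Complex.normSq_pos.2 hul⟩

-- A linear relation is what makes it possible to add small multiples of `w` to the `G l` without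
-- creating cross terms: the frame operator then only loses mass at `c` and gains it at `c'`.
lemma IsPotentialMinimizer.eq_zero_of_sum_smul_eq_zero (hmin : IsPotentialMinimizer f S₀ G)
    (hf : StrictConvexOn ℝ (Set.Ici 0) f) (hS₀ : S₀.PosSemidef) (hcc' : c' < c)
    {w : Fin d → ℂ} (hw : w ≠ 0) (hSw : (S₀ + frameOp G) *ᵥ w = (c' : ℂ) • w)
    (hG : ∀ l, G l ≠ 0) {z : Fin k → ℂ}
    (hz : ∀ l, z l ≠ 0 → (S₀ + frameOp G) *ᵥ G l = (c : ℂ) • G l)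
    (hsum : ∑ l, z l • G l = 0) (l : Fin k) : z l = 0 := by
  obtain ⟨w, hw1, hSw, -⟩ := exists_unit_eigenvector hw hSw
  have ha (l : Fin k) : 0 < normSqVec (G l) := normSqVec_pos_iff.2 (hG l)
  obtain ⟨t, ht, hta, hts⟩ := exists_pos_forall_sq_mul_le (b := fun l => 4 * Complex.normSq (z l))
    ha (sub_pos.2 hcc')
  have hζ (l : Fin k) : Complex.normSq (t * star (z l)) = t ^ 2 * Complex.normSq (z l) := by
    rw [Complex.normSq_mul, Complex.normSq_ofReal, Complex.star_def, Complex.normSq_conj, sq]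
  choose C u hCu hCuζ hu using fun l =>
    exists_sq_mul_add_normSq_eq (ha l) (ζ := t * star (z l)) (by linarith [hζ l, hta l])
  have z_eq_zero (l : Fin k) (hl : u l = 0) : z l = 0 := by
    have := (hCuζ l).symm
    simpa only [hl, mul_zero, mul_eq_zero, Complex.ofReal_eq_zero, ht.ne', false_or,
      star_eq_zero] using this
  have u_eq_zero (l : Fin k) (hl : z l = 0) : u l = 0 := by
    have := hu l
    rw [hζ, hl, map_zero, mul_zero, mul_zero] at this
    exact Complex.normSq_eq_zero.1 (this.antisymm (Complex.normSq_nonneg _))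
  have hcross : ∑ l, ((C l : ℂ) * star (u l)) • G l = 0 := by
    have hterm (l : Fin k) : (C l : ℂ) * star (u l) = t * z l := by
      simpa using congrArg star (hCuζ l)
    simp only [hterm, mul_smul, ← smul_sum, hsum, smul_zero]
  have hlt : ∑ l, Complex.normSq (u l) < c - c' := by
    refine (sum_le_sum fun l _ => ?_).trans_lt ((mul_sum _ _ _).symm.trans_lt hts)
    nlinarith [hu l, hζ l, Complex.normSq_nonneg (z l), sq_nonneg t]
  exact z_eq_zero l (hmin.eq_zero_of_smul_add_smul hf hS₀ hcc' hw1 hSw hG hCu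
    (fun l hl => hz l (mt (u_eq_zero l) hl)) hcross hlt l)

theorem IsPotentialMinimizer.linearIndepOn (hmin : IsPotentialMinimizer f S₀ G)
    (hf : StrictConvexOn ℝ (Set.Ici 0) f) (hS₀ : S₀.PosSemidef) (hcc' : c' < c)
    {w : Fin d → ℂ} (hw : w ≠ 0) (hSw : (S₀ + frameOp G) *ᵥ w = (c' : ℂ) • w)
    (hG : ∀ l, G l ≠ 0) :
    LinearIndepOn ℂ G {l | (S₀ + frameOp G) *ᵥ G l = (c : ℂ) • G l} := by
  rw [linearIndepOn_iff'']
  intro t z htsub hzt hsum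
  refine fun l _ => hmin.eq_zero_of_sum_smul_eq_zero hf hS₀ hcc' hw hSw hG
    (fun l hl => htsub (not_not.1 fun hlt => hl (hzt l hlt))) ?_ l
  rw [← hsum]
  exact (sum_subset (subset_univ t) fun l _ hl => by rw [hzt l hl, zero_smul]).symm

end LinearIndependence

section OppositeOrder

variable {n : Type*}

lemma exists_equiv_monotone_antitone_of_antivary [Fintype n] {d : ℕ} (hd : Fintype.card n = d)
    {x y : n → ℝ} (hxy : Antivary x y) :
    ∃ σ : Fin d ≃ n, Monotone (x ∘ σ) ∧ Antitone (y ∘ σ) := by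
  obtain ⟨_, hx, hy⟩ := hxy.exists_monotone_antitone
  let σ := Fintype.orderIsoFinOfCardEq n hd
  exact ⟨σ.toEquiv, hx.comp σ.monotone, hy.comp_monotone σ.monotone⟩

lemma exists_conj_realDiagonal_comp_perm [Fintype n] [DecidableEq n] (U : unitaryGroup n ℂ)
    (σ : Equiv.Perm n) :
    ∃ V : unitaryGroup n ℂ, ∀ α : n → ℝ,
      conjStarAlgAut ℂ _ U (realDiagonal α) = conjStarAlgAut ℂ _ V (realDiagonal (α ∘ σ)) := by
  let P : unitaryGroup n ℂ := ⟨(σ⁻¹).permMatrix ℂ, by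
    rw [mem_unitaryGroup_iff, star_eq_conjTranspose, conjTranspose_permMatrix, ← permMatrix_mul]
    simp⟩
  refine ⟨U * P, fun α => ?_⟩
  have hP : conjStarAlgAut ℂ _ P (realDiagonal (α ∘ σ)) = realDiagonal α := by
    rw [conjStarAlgAut_apply, star_eq_conjTranspose]
    simp only [P, conjTranspose_permMatrix, inv_inv, PEquiv.toMatrix_toPEquiv_mul,
      PEquiv.mul_toMatrix_toPEquiv, submatrix_submatrix, realDiagonal]
    exact (submatrix_diagonal_equiv _ σ.symm).trans (by simp [Function.comp_def])
  rw [conjStarAlgAut_mul_apply, hP]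

variable {d k : ℕ} {f : ℝ → ℝ} {S₀ : Matrix (Fin d) (Fin d) ℂ} {G : Fin k → Fin d → ℂ}

lemma frameOp_comp_equiv (σ : Equiv.Perm (Fin d)) :
    frameOp (fun l => G l ∘ σ) = (frameOp G).submatrix σ σ := by
  ext i j
  simp [frameOp, Matrix.sum_apply, vecMulVec_apply]

lemma submatrix_swap_realDiagonal (y : Fin d → ℝ) {i j : Fin d} (hij : i ≠ j) :
    (realDiagonal y).submatrix (Equiv.swap i j) (Equiv.swap i j) =
      realDiagonal y - ((y j - y i : ℝ) : ℂ) • vecMulVec (Pi.single j 1) (star (Pi.single j 1)) +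
        ((y j - y i : ℝ) : ℂ) • vecMulVec (Pi.single i 1) (star (Pi.single i 1)) := by
  have single (w : Fin d) :
      vecMulVec (Pi.single w (1 : ℂ)) (star (Pi.single w (1 : ℂ))) = diagonal (Pi.single w 1) := by
    rw [← Pi.single_star, star_one, ← single_eq_single_vecMulVec_single, diagonal_single]
  rw [single, single, realDiagonal, submatrix_diagonal_equiv, ← diagonal_smul, ← diagonal_smul,
    diagonal_sub, diagonal_add, diagonal_eq_diagonal_iff]
  intro m
  rcases eq_or_ne m i with rfl | hmi
  · simp [hij]
  rcases eq_or_ne m j with rfl | hmj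
  · simp [hmi]
  · simp [hmi, hmj, Equiv.swap_apply_of_ne_of_ne]

lemma IsPotentialMinimizer.antivary {x y : Fin d → ℝ}
    (hmin : IsPotentialMinimizer f (realDiagonal x) G) (hf : StrictConvexOn ℝ (Set.Ici 0) f)
    (hx : (realDiagonal x).PosSemidef) (hy : frameOp G = realDiagonal y) : Antivary x y := by
  intro i j hyij
  by_contra! hxij
  have hij : i ≠ j := by rintro rfl; exact hxij.false
  have eigen (m : Fin d) :
      (realDiagonal x + frameOp G) *ᵥ Pi.single m 1 = (((x + y) m : ℝ) : ℂ) • Pi.single m 1 := by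
    rw [hy, realDiagonal_add, realDiagonal_mulVec_single]
  refine hmin.not_transfer_of_mulVec (G' := fun l => G l ∘ Equiv.swap i j) hf hx (eigen j)
    (normSqVec_single i) (eigen i) (sub_pos.2 hyij) ?_
    (fun l => Equiv.sum_comp (Equiv.swap i j) fun m => Complex.normSq (G l m)) ?_
  · simp only [Pi.add_apply]
    linarith
  · rw [frameOp_comp_equiv, hy, submatrix_swap_realDiagonal y hij]

lemma commute_frameOp {S : Matrix (Fin d) (Fin d) ℂ} (hS : S.IsHermitian)
    (hG : ∀ l, ∃ c : ℝ, S *ᵥ G l = (c : ℂ) • G l) : Commute S (frameOp G) :=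
  Commute.sum_right _ _ _ fun l _ =>
    have ⟨_, hc⟩ := hG l
    commute_of_mul_eq_smul hS (posSemidef_vecMulVec_self_star _).1
      (mul_vecMulVec_star_of_mulVec_eq hc)

lemma IsPotentialMinimizer.exists_of_conj (hmin : IsPotentialMinimizer f S₀ G)
    (hS₀ : S₀.IsHermitian) {U : unitaryGroup (Fin d) ℂ} {A B : Matrix (Fin d) (Fin d) ℂ}
    (hA : S₀ = conjStarAlgAut ℂ _ U A) (hB : frameOp G = conjStarAlgAut ℂ _ U B) :
    ∃ H : Fin k → Fin d → ℂ, IsPotentialMinimizer f A H ∧ frameOp H = B ∧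
      (∀ l, normSqVec (H l) = normSqVec (G l)) ∧
      ∀ l (c : ℂ), (S₀ + frameOp G) *ᵥ G l = c • G l ↔ (A + B) *ᵥ H l = c • H l := by
  have inv (M : Matrix (Fin d) (Fin d) ℂ) :
      conjStarAlgAut ℂ _ (star U) (conjStarAlgAut ℂ _ U M) = M := by
    rw [← conjStarAlgAut_mul_apply]
    simp
  have hmin' := hmin.conj hS₀ (star U)
  rw [hA, inv] at hmin'
  refine ⟨_, hmin', by rw [frameOp_unitary_mulVec, hB, inv],
    fun l => normSqVec_unitary_mulVec _ _, fun l c => ?_⟩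
  have hU : G l = (U : Matrix (Fin d) (Fin d) ℂ) *ᵥ
      ((star U : unitaryGroup (Fin d) ℂ) : Matrix (Fin d) (Fin d) ℂ) *ᵥ G l := by
    rw [mulVec_mulVec, coe_star, mul_star_self_of_mem U.2, one_mulVec]
  have hinj : Function.Injective ((U : Matrix (Fin d) (Fin d) ℂ) *ᵥ ·) :=
    mulVec_injective_of_isUnit isUnit_coe
  generalize ((star U : unitaryGroup (Fin d) ℂ) : Matrix (Fin d) (Fin d) ℂ) *ᵥ G l = v at hU ⊢
  rw [hA, hB, ← map_add, hU, conjStarAlgAut_apply, mulVec_mulVec, Matrix.mul_assoc,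
    star_mul_self_of_mem U.2, mul_one, ← mulVec_mulVec, ← mulVec_smul]
  exact hinj.eq_iff

theorem IsPotentialMinimizer.exists_realDiagonal_eigs (hmin : IsPotentialMinimizer f S₀ G)
    (hf : StrictConvexOn ℝ (Set.Ici 0) f) (hS₀ : S₀.PosSemidef)
    (hG : ∀ l, ∃ c : ℝ, (S₀ + frameOp G) *ᵥ G l = (c : ℂ) • G l) :
    ∃ U : unitaryGroup (Fin d) ℂ,
      S₀ = conjStarAlgAut ℂ _ U (realDiagonal (eigsAsc S₀)) ∧
      frameOp G = conjStarAlgAut ℂ _ U (realDiagonal (eigsDesc (frameOp G))) := by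
  have hcomm : Commute S₀ (frameOp G) := by
    simpa using (commute_frameOp (hS₀.add (frameOp_posSemidef G)).1 hG).sub_left (Commute.refl _)
  obtain ⟨U, x, y, hx, hy⟩ := exists_joint_diagonalization hS₀.1 (frameOp_posSemidef G).1 hcomm
  obtain ⟨H, hH, hHy, -⟩ := hmin.exists_of_conj hS₀.1 hx hy
  have hxpos : (realDiagonal x).PosSemidef := (posSemidef_conjStarAlgAut U).1 (hx ▸ hS₀)
  obtain ⟨σ, hxσ, hyσ⟩ :=
    exists_equiv_monotone_antitone_of_antivary (Fintype.card_fin d) (hH.antivary hf hxpos hHy)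
  obtain ⟨V, hV⟩ := exists_conj_realDiagonal_comp_perm U σ
  rw [hV] at hx hy
  refine ⟨V, ?_, ?_⟩
  · conv_rhs => rw [hx, eigsAsc_conj_realDiagonal V hxσ, ← hx]
  · conv_rhs => rw [hy, eigsDesc_conj_realDiagonal V hyσ, ← hy]

end OppositeOrder

section Multiplicities

variable {d k : ℕ} {f : ℝ → ℝ} {S₀ : Matrix (Fin d) (Fin d) ℂ} {G : Fin k → Fin d → ℂ}
  {μ ν : Fin d → ℝ} {c : ℝ} {t : Finset (Fin k)} {u : Finset (Fin d)}

lemma rank_sum_vecMulVec_star (h : LinearIndepOn ℂ G t) :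
    (∑ l ∈ t, vecMulVec (G l) (star (G l))).rank = #t := by
  let M : Matrix t (Fin d) ℂ := of fun l => G l
  have hM : ∑ l ∈ t, vecMulVec (G l) (star (G l)) = Mᵀ * Mᵀᴴ := by
    ext i j
    rw [← sum_coe_sort, Matrix.sum_apply, mul_apply]
    rfl
  have hrows : LinearIndependent ℂ M.row := h
  rw [hM, rank_self_mul_conjTranspose, rank_transpose, hrows.rank_matrix, Fintype.card_coe]

lemma sum_vecMulVec_star_of_mem_iff (hμ : frameOp G = realDiagonal μ)
    (hG : ∀ l, ∃ c : ℝ, realDiagonal ν *ᵥ G l = (c : ℂ) • G l)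
    (ht : ∀ l, l ∈ t ↔ realDiagonal ν *ᵥ G l = (c : ℂ) • G l)
    (hu : ∀ i, i ∈ u ↔ ν i = c ∧ μ i ≠ 0) :
    ∑ l ∈ t, vecMulVec (G l) (star (G l)) = realDiagonal fun i => if i ∈ u then μ i else 0 := by
  have mem_iff {l : Fin k} {i : Fin d} (hli : G l i ≠ 0) : l ∈ t ↔ ν i = c := by
    rw [ht]
    refine ⟨fun h => eq_of_realDiagonal_mulVec_eq_smul h hli, fun h => ?_⟩
    obtain ⟨c', hc'⟩ := hG l
    rwa [← h, eq_of_realDiagonal_mulVec_eq_smul hc' hli]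
  ext i j
  rw [Matrix.sum_apply]
  simp only [vecMulVec_apply]
  by_cases hi : ν i = c
  · have hfull : ∑ l ∈ t, G l i * star (G l) j = frameOp G i j := by
      rw [frameOp, Matrix.sum_apply]
      refine sum_subset (subset_univ t) fun l _ hl => ?_
      rw [not_not.1 fun hli => hl ((mem_iff hli).2 hi), zero_mul]
    have hμi : (if i ∈ u then μ i else 0) = μ i := by
      simp only [hu, hi, true_and, ite_eq_left_iff, not_not]
      exact Eq.symm
    rw [hfull, hμ, realDiagonal, realDiagonal, diagonal_apply, diagonal_apply, hμi]
  · have hiu : i ∉ u := fun h => hi ((hu i).1 h).1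
    have hzero : ∑ l ∈ t, G l i * star (G l) j = 0 := sum_eq_zero fun l hl => by
      rw [not_not.1 fun hli => hi ((mem_iff hli).1 hl), zero_mul]
    rw [hzero]
    simp [realDiagonal, diagonal_apply, hiu]

lemma sum_normSqVec_eq_sum_of_mem_iff (hμ : frameOp G = realDiagonal μ)
    (hG : ∀ l, ∃ c : ℝ, realDiagonal ν *ᵥ G l = (c : ℂ) • G l)
    (ht : ∀ l, l ∈ t ↔ realDiagonal ν *ᵥ G l = (c : ℂ) • G l)
    (hu : ∀ i, i ∈ u ↔ ν i = c ∧ μ i ≠ 0) : ∑ l ∈ t, normSqVec (G l) = ∑ i ∈ u, μ i := by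
  have := congrArg trace (sum_vecMulVec_star_of_mem_iff hμ hG ht hu)
  rw [trace_sum, realDiagonal, trace_diagonal] at this
  simp only [trace_vecMulVec_star, ← Complex.ofReal_sum, Complex.ofReal_inj] at this
  rw [this, sum_ite_mem, univ_inter]

theorem IsPotentialMinimizer.card_eq_card_of_mem_iff (hmin : IsPotentialMinimizer f S₀ G)
    (hf : StrictConvexOn ℝ (Set.Ici 0) f) (hS₀ : S₀.PosSemidef) (hμ : frameOp G = realDiagonal μ)
    (hν : S₀ + frameOp G = realDiagonal ν)
    (hG : ∀ l, ∃ c : ℝ, realDiagonal ν *ᵥ G l = (c : ℂ) • G l) (hG0 : ∀ l, G l ≠ 0)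
    (ht : ∀ l, l ∈ t ↔ realDiagonal ν *ᵥ G l = (c : ℂ) • G l)
    (hu : ∀ i, i ∈ u ↔ ν i = c ∧ μ i ≠ 0) {i' : Fin d} (hi' : ν i' < c) : #t = #u := by
  have hindep := hmin.linearIndepOn hf hS₀ hi' (w := Pi.single i' 1) (by simp)
    (by rw [hν, realDiagonal_mulVec_single]) hG0
  simp only [hν, ← ht] at hindep
  rw [← rank_sum_vecMulVec_star hindep, sum_vecMulVec_star_of_mem_iff hμ hG ht hu, realDiagonal,
    rank_diagonal, ← Fintype.card_coe]
  refine Fintype.card_congr (Equiv.subtypeEquivRight fun i => ?_)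
  simp only [ne_eq, Complex.ofReal_eq_zero, ite_eq_right_iff, Classical.not_imp,
    and_iff_left_iff_imp]
  exact fun h => ((hu i).1 h).2

end Multiplicities

section SpectralRelations

variable {d k : ℕ} {f : ℝ → ℝ} {S₀ : Matrix (Fin d) (Fin d) ℂ} {G : Fin k → Fin d → ℂ}

lemma IsPotentialMinimizer.exists_realDiagonal_model (hmin : IsPotentialMinimizer f S₀ G)
    (hf : StrictConvexOn ℝ (Set.Ici 0) f) (hS₀ : S₀.PosSemidef)
    (hG : ∀ l, ∃ c : ℝ, (S₀ + frameOp G) *ᵥ G l = (c : ℂ) • G l) :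
    ∃ H : Fin k → Fin d → ℂ, IsPotentialMinimizer f (realDiagonal (eigsAsc S₀)) H ∧
      (realDiagonal (eigsAsc S₀)).PosSemidef ∧ frameOp H = realDiagonal (eigsDesc (frameOp G)) ∧
      (∀ l, normSqVec (H l) = normSqVec (G l)) ∧
      ∀ l (c : ℂ), (S₀ + frameOp G) *ᵥ G l = c • G l ↔
        realDiagonal (eigsAsc S₀ + eigsDesc (frameOp G)) *ᵥ H l = c • H l := by
  obtain ⟨U, hA, hB⟩ := hmin.exists_realDiagonal_eigs hf hS₀ hG
  obtain ⟨H, hH, hHμ, hnorm, heigen⟩ := hmin.exists_of_conj hS₀.1 hA hB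
  rw [realDiagonal_add] at heigen
  exact ⟨H, hH, (posSemidef_conjStarAlgAut U).1 (hA ▸ hS₀), hHμ, hnorm, heigen⟩

lemma IsPotentialMinimizer.eigsDesc_lt_of_eigsAsc_add_lt (hmin : IsPotentialMinimizer f S₀ G)
    (hf : StrictConvexOn ℝ (Set.Ici 0) f) (hS₀ : S₀.PosSemidef)
    (hG : ∀ l, ∃ c : ℝ, (S₀ + frameOp G) *ᵥ G l = (c : ℂ) • G l) {i i' : Fin d}
    (hlt : eigsAsc S₀ i' + eigsDesc (frameOp G) i' < eigsAsc S₀ i + eigsDesc (frameOp G) i)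
    (hi : eigsDesc (frameOp G) i ≠ 0) : eigsDesc (frameOp G) i' < eigsDesc (frameOp G) i := by
  obtain ⟨H, hH, hA, hHμ, -, heigen⟩ := hmin.exists_realDiagonal_model hf hS₀ hG
  have hν := realDiagonal_add (eigsAsc S₀) (eigsDesc (frameOp G))
  refine hH.weight_lt_of_eigenvalue_lt hf hA hHμ (hHμ ▸ hν) (fun l => ?_) hlt
    ((nonneg_of_frameOp_eq_realDiagonal hHμ i).lt_of_ne' hi)
  obtain ⟨c, hc⟩ := hG l
  exact ⟨c, by rw [hHμ, hν, ← heigen, hc]⟩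

variable {c : ℝ} {t : Finset (Fin k)} {u : Finset (Fin d)}

lemma IsPotentialMinimizer.sum_normSqVec_eq_sum_eigsDesc (hmin : IsPotentialMinimizer f S₀ G)
    (hf : StrictConvexOn ℝ (Set.Ici 0) f) (hS₀ : S₀.PosSemidef)
    (hG : ∀ l, ∃ c : ℝ, (S₀ + frameOp G) *ᵥ G l = (c : ℂ) • G l)
    (ht : ∀ l, l ∈ t ↔ (S₀ + frameOp G) *ᵥ G l = (c : ℂ) • G l)
    (hu : ∀ i, i ∈ u ↔
      eigsAsc S₀ i + eigsDesc (frameOp G) i = c ∧ eigsDesc (frameOp G) i ≠ 0) :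
    ∑ l ∈ t, normSqVec (G l) = ∑ i ∈ u, eigsDesc (frameOp G) i := by
  obtain ⟨H, -, -, hHμ, hnorm, heigen⟩ := hmin.exists_realDiagonal_model hf hS₀ hG
  simp only [heigen, ← hnorm] at hG ht ⊢
  exact sum_normSqVec_eq_sum_of_mem_iff hHμ hG ht hu

lemma IsPotentialMinimizer.card_eq_card_eigsDesc (hmin : IsPotentialMinimizer f S₀ G)
    (hf : StrictConvexOn ℝ (Set.Ici 0) f) (hS₀ : S₀.PosSemidef)
    (hG : ∀ l, ∃ c : ℝ, (S₀ + frameOp G) *ᵥ G l = (c : ℂ) • G l) (hG0 : ∀ l, G l ≠ 0)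
    (ht : ∀ l, l ∈ t ↔ (S₀ + frameOp G) *ᵥ G l = (c : ℂ) • G l)
    (hu : ∀ i, i ∈ u ↔
      eigsAsc S₀ i + eigsDesc (frameOp G) i = c ∧ eigsDesc (frameOp G) i ≠ 0)
    {i' : Fin d} (hi' : eigsAsc S₀ i' + eigsDesc (frameOp G) i' < c) : #t = #u := by
  obtain ⟨H, hH, hA, hHμ, hnorm, heigen⟩ := hmin.exists_realDiagonal_model hf hS₀ hG
  simp only [← normSqVec_pos_iff, heigen, ← hnorm] at hG hG0 ht
  simp only [normSqVec_pos_iff] at hG0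
  exact hH.card_eq_card_of_mem_iff hf hA hHμ (by rw [hHμ, realDiagonal_add]) hG hG0 ht hu hi'

end SpectralRelations

section Blocks

/-- `K i` is the unique `j` with `R i j`; the value `p` encodes that there is no such `j`. -/
def IsIndexOf {ι : Type*} {p : ℕ} (R : ι → Fin p → Prop) (K : ι → ℕ) : Prop :=
  ∀ i, K i ≤ p ∧ ∀ j : Fin p, K i = j ↔ R i j

lemma exists_isIndexOf {ι : Type*} {p : ℕ} {R : ι → Fin p → Prop}
    (hR : ∀ i j j', R i j → R i j' → j = j') : ∃ K, IsIndexOf R K := by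
  choose K hK using fun i => show ∃ m ≤ p, ∀ j : Fin p, m = j ↔ R i j from by
    by_cases h : ∃ j, R i j
    · obtain ⟨j, hj⟩ := h
      refine ⟨j, j.2.le, fun j' => ?_⟩
      rw [← Fin.ext_iff]
      exact ⟨fun h => h ▸ hj, hR i j j' hj⟩
    · exact ⟨p, le_rfl, fun j => ⟨fun h => absurd h j.2.ne', fun hj => absurd ⟨j, hj⟩ h⟩⟩
  exact ⟨K, hK⟩

lemma IsIndexOf.lt_iff {ι : Type*} {p : ℕ} {R : ι → Fin p → Prop} {K : ι → ℕ}
    (hK : IsIndexOf R K) {i : ι} : K i < p ↔ ∃ j, R i j :=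
  ⟨fun h => ⟨⟨K i, h⟩, ((hK i).2 ⟨K i, h⟩).1 rfl⟩, fun ⟨j, hj⟩ => ((hK i).2 j).2 hj ▸ j.2⟩

lemma IsIndexOf.monotone {ι : Type*} [Preorder ι] {p : ℕ} {R : ι → Fin p → Prop} {K : ι → ℕ}
    (hK : IsIndexOf R K) (hR : ∀ i i' j', i ≤ i' → R i' j' → ∃ j ≤ j', R i j) : Monotone K := by
  intro i i' hii'
  rcases (hK i').1.eq_or_lt with h | h
  · exact h ▸ (hK i).1
  · obtain ⟨j', hj'⟩ := hK.lt_iff.1 h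
    obtain ⟨j, hjj', hj⟩ := hR i i' j' hii' hj'
    rw [((hK i).2 j).2 hj, ((hK i').2 j').2 hj']
    exact hjj'

variable {m n : ℕ} {h : Fin n → ℕ} {h' : Fin m → ℕ} {i : Fin n} {j N : ℕ}

/-- The number of indices of label less than `j`: for monotone labels, the position at which the
block labelled `j` starts. -/
def blockStart (h : Fin n → ℕ) (j : ℕ) : ℕ := #{i | h i < j}

lemma lt_blockStart_iff (hh : Monotone h) : (i : ℕ) < blockStart h j ↔ h i < j :=
  Tuple.lt_card_lt_iff_apply_lt_of_monotone hh

lemma eq_iff_blockStart_le_and_lt (hh : Monotone h) :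
    h i = j ↔ blockStart h j ≤ i ∧ (i : ℕ) < blockStart h (j + 1) := by
  rw [lt_blockStart_iff hh, ← not_lt, lt_blockStart_iff hh]
  omega

lemma blockStart_zero (h : Fin n → ℕ) : blockStart h 0 = 0 := by simp [blockStart]

lemma blockStart_succ (h : Fin n → ℕ) (j : ℕ) :
    blockStart h (j + 1) = blockStart h j + #{i | h i = j} := by
  rw [blockStart, blockStart, ← card_union_of_disjoint, ← filter_or]
  · simp only [Nat.lt_succ_iff_lt_or_eq]
  · exact disjoint_filter.2 fun _ _ h => h.ne

lemma blockStart_congr (hcard : ∀ j, j + 1 < N → #{i | h i = j} = #{i | h' i = j}) :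
    ∀ j < N, blockStart h j = blockStart h' j := by
  intro j hj
  induction j with
  | zero => simp only [blockStart_zero]
  | succ j ih => rw [blockStart_succ, blockStart_succ, ih (by omega), hcard j hj]

lemma eq_iff_blockStart_le_and_lt_of_congr (hh : Monotone h) (hN : ∀ i, h i < N)
    (hstart : ∀ j < N, blockStart h j = blockStart h' j) (hj : j < N) :
    h i = j ↔ blockStart h' j ≤ i ∧ (j + 1 < N → (i : ℕ) < blockStart h' (j + 1)) := by
  rw [← hstart j hj, eq_iff_blockStart_le_and_lt hh]
  refine and_congr_right fun _ => ⟨fun hi hj' => hstart _ hj' ▸ hi, fun hi => ?_⟩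
  by_cases hj' : j + 1 < N
  · exact hstart _ hj' ▸ hi hj'
  · exact (lt_blockStart_iff hh).2 ((hN i).trans_le (not_lt.1 hj'))

lemma blockStart_lt_succ (hattain : ∃ i, h i = j) : blockStart h j < blockStart h (j + 1) := by
  obtain ⟨i, hi⟩ := hattain
  rw [blockStart_succ]
  exact Nat.lt_add_of_pos_right (card_pos.2 ⟨i, (mem_filter_univ i).2 hi⟩)

lemma blockStart_eq_of_lt_iff {r : ℕ} (hr : r ≤ n) (hlt : ∀ i, h i < j ↔ (i : ℕ) < r) :
    blockStart h j = r := by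
  simp only [blockStart, hlt]
  rw [Fin.card_filter_val_lt, min_eq_right hr]

end Blocks

section Averages

variable {d k lo hi : ℕ} {lam : Fin d → ℝ} {a : Fin k → ℝ} {c : ℝ} {I : Finset (Fin d)}
  {L : Finset (Fin k)}

lemma eq_initAvg (hlt : lo < hi) (hI : ∀ i, i ∈ I ↔ lo ≤ (i : ℕ) ∧ (i : ℕ) < hi)
    (hL : ∀ l, l ∈ L ↔ lo ≤ (l : ℕ) ∧ (l : ℕ) < hi)
    (h : ((hi : ℝ) - lo) * c = ∑ i ∈ I, lam i + ∑ l ∈ L, a l) : c = initAvg lam a lo hi := by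
  have hne : (hi : ℝ) - lo ≠ 0 := sub_ne_zero.2 (by exact_mod_cast hlt.ne')
  simp only [initAvg, ← hI, ← hL, sum_ite_mem, univ_inter]
  rw [← h, mul_div_cancel_left₀ _ hne]

lemma eq_finalAvg (hlt : lo < hi) (hI : ∀ i, i ∈ I ↔ lo ≤ (i : ℕ) ∧ (i : ℕ) < hi)
    (hL : ∀ l, l ∈ L ↔ lo ≤ (l : ℕ))
    (h : ((hi : ℝ) - lo) * c = ∑ i ∈ I, lam i + ∑ l ∈ L, a l) : c = finalAvg lam a lo hi := by
  have hne : (hi : ℝ) - lo ≠ 0 := sub_ne_zero.2 (by exact_mod_cast hlt.ne')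
  simp only [finalAvg, ← hI, ← hL, sum_ite_mem, univ_inter]
  rw [add_comm, ← h, mul_div_cancel_left₀ _ hne]

variable {K : Fin d → ℕ} {J : Fin k → ℕ} {p j : ℕ}

lemma eq_initAvg_blockStart (hK : Monotone K) (hJ : Monotone J)
    (hstart : ∀ j < p, blockStart J j = blockStart K j) (hj : j + 1 < p) (hattain : ∃ i, K i = j)
    (hsum : (#{i | K i = j} : ℝ) * c = ∑ i with K i = j, lam i + ∑ l with J l = j, a l) :
    c = initAvg lam a (blockStart K j) (blockStart K (j + 1)) := by
  refine eq_initAvg (blockStart_lt_succ hattain) (fun i => ?_) (fun l => ?_)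
    (by rwa [blockStart_succ, Nat.cast_add, add_sub_cancel_left])
  · rw [mem_filter_univ, eq_iff_blockStart_le_and_lt hK]
  · rw [mem_filter_univ, eq_iff_blockStart_le_and_lt hJ, hstart j (by omega), hstart _ hj]

lemma eq_finalAvg_blockStart (hK : Monotone K) (hJ : Monotone J) (hJlt : ∀ l, J l < j + 1)
    (hstart : blockStart J j = blockStart K j) (hattain : ∃ i, K i = j)
    (hsum : (#{i | K i = j} : ℝ) * c = ∑ i with K i = j, lam i + ∑ l with J l = j, a l) :
    c = finalAvg lam a (blockStart K j) (blockStart K (j + 1)) := by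
  refine eq_finalAvg (blockStart_lt_succ hattain) (fun i => ?_) (fun l => ?_)
    (by rwa [blockStart_succ, Nat.cast_add, add_sub_cancel_left])
  · rw [mem_filter_univ, eq_iff_blockStart_le_and_lt hK]
  · rw [mem_filter_univ, ← hstart, eq_iff_blockStart_le_and_lt hJ, lt_blockStart_iff hJ,
      and_iff_left (hJlt l)]

end Averages

section BlockStructure

variable {d k : ℕ} {f : ℝ → ℝ} {S₀ : Matrix (Fin d) (Fin d) ℂ} {G : Fin k → Fin d → ℂ}
  {sF p : ℕ} {c : Fin p → ℝ} {K : Fin d → ℕ} {J : Fin k → ℕ}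

lemma antitone_eigsDesc (S : Matrix (Fin d) (Fin d) ℂ) : Antitone (eigsDesc S) := by
  rw [eigsDesc]
  split_ifs
  · exact antitone_sortDesc _
  · exact antitone_const

lemma IsPotentialMinimizer.monotone_spectrumIndex (hmin : IsPotentialMinimizer f S₀ G)
    (hf : StrictConvexOn ℝ (Set.Ici 0) f) (hS₀ : S₀.PosSemidef)
    (hG : ∀ l, ∃ c : ℝ, (S₀ + frameOp G) *ᵥ G l = (c : ℂ) • G l) (hc : StrictAnti c)
    (hsF : ∀ i : Fin d, eigsDesc (frameOp G) i ≠ 0 ↔ (i : ℕ) < sF)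
    (hcover : ∀ i : Fin d, (i : ℕ) < sF → ∃ j, eigsAsc S₀ i + eigsDesc (frameOp G) i = c j)
    (hK : IsIndexOf
      (fun (i : Fin d) j => (i : ℕ) < sF ∧ eigsAsc S₀ i + eigsDesc (frameOp G) i = c j) K) :
    Monotone K := by
  refine hK.monotone fun i i' j' hii' ⟨hi', hj'⟩ => ?_
  have hi : (i : ℕ) < sF := lt_of_le_of_lt hii' hi'
  obtain ⟨j, hj⟩ := hcover i hi
  refine ⟨j, ?_, hi, hj⟩
  by_contra! hlt
  exact (antitone_eigsDesc _ hii').not_gt (hmin.eigsDesc_lt_of_eigsAsc_add_lt hf hS₀ hG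
    (by rw [hj, hj']; exact hc hlt) ((hsF i').2 hi'))

lemma IsPotentialMinimizer.monotone_vectorIndex (hmin : IsPotentialMinimizer f S₀ G)
    (hf : StrictConvexOn ℝ (Set.Ici 0) f) (hS₀ : S₀.PosSemidef)
    (hG : ∀ l, ∃ j, (S₀ + frameOp G) *ᵥ G l = (c j : ℂ) • G l) (hG0 : ∀ l, G l ≠ 0)
    (hanti : Antitone fun l => normSqVec (G l)) (hc : StrictAnti c)
    (hJ : IsIndexOf (fun l j => (S₀ + frameOp G) *ᵥ G l = (c j : ℂ) • G l) J) : Monotone J := by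
  refine hJ.monotone fun l l' j' hll' hj' => ?_
  obtain ⟨j, hj⟩ := hG l
  refine ⟨j, ?_, hj⟩
  by_contra! hlt
  exact (hanti hll').not_gt (hmin.normSqVec_lt_of_eigenvalue_lt hf hS₀ (hc hlt) hj' hj (hG0 l'))

lemma IsPotentialMinimizer.card_filter_index_eq (hmin : IsPotentialMinimizer f S₀ G)
    (hf : StrictConvexOn ℝ (Set.Ici 0) f) (hS₀ : S₀.PosSemidef)
    (hG : ∀ l, ∃ c : ℝ, (S₀ + frameOp G) *ᵥ G l = (c : ℂ) • G l) (hG0 : ∀ l, G l ≠ 0)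
    (hc : StrictAnti c) (hsF : ∀ i : Fin d, eigsDesc (frameOp G) i ≠ 0 ↔ (i : ℕ) < sF)
    (hattain : ∀ j, ∃ i, eigsAsc S₀ i + eigsDesc (frameOp G) i = c j)
    (hK : IsIndexOf
      (fun (i : Fin d) j => (i : ℕ) < sF ∧ eigsAsc S₀ i + eigsDesc (frameOp G) i = c j) K)
    (hJ : IsIndexOf (fun l j => (S₀ + frameOp G) *ᵥ G l = (c j : ℂ) • G l) J)
    {j : ℕ} (hj : j + 1 < p) : #{l | J l = j} = #{i | K i = j} := by
  obtain ⟨i', hi'⟩ := hattain ⟨j + 1, hj⟩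
  refine hmin.card_eq_card_eigsDesc hf hS₀ hG hG0 (c := c ⟨j, by omega⟩) (i' := i')
    (fun l => ?_) (fun i => ?_) (by rw [hi']; exact hc (Fin.mk_lt_mk.2 j.lt_succ_self))
  · rw [mem_filter_univ]
    exact (hJ l).2 ⟨j, by omega⟩
  · rw [mem_filter_univ, hsF, and_comm]
    exact (hK i).2 ⟨j, by omega⟩

lemma IsPotentialMinimizer.card_mul_eq_sum_add_sum (hmin : IsPotentialMinimizer f S₀ G)
    (hf : StrictConvexOn ℝ (Set.Ici 0) f) (hS₀ : S₀.PosSemidef)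
    (hG : ∀ l, ∃ c : ℝ, (S₀ + frameOp G) *ᵥ G l = (c : ℂ) • G l)
    (hsF : ∀ i : Fin d, eigsDesc (frameOp G) i ≠ 0 ↔ (i : ℕ) < sF)
    (hK : IsIndexOf
      (fun (i : Fin d) j => (i : ℕ) < sF ∧ eigsAsc S₀ i + eigsDesc (frameOp G) i = c j) K)
    (hJ : IsIndexOf (fun l j => (S₀ + frameOp G) *ᵥ G l = (c j : ℂ) • G l) J) (j : Fin p) :
    (#{i | K i = j} : ℝ) * c j =
      ∑ i with K i = j, eigsAsc S₀ i + ∑ l with J l = j, normSqVec (G l) := by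
  have hsum : ∑ l with J l = j, normSqVec (G l) = ∑ i with K i = j, eigsDesc (frameOp G) i :=
    hmin.sum_normSqVec_eq_sum_eigsDesc hf hS₀ hG
      (fun l => by rw [mem_filter_univ]; exact (hJ l).2 j)
      fun i => by rw [mem_filter_univ, hsF, and_comm]; exact (hK i).2 j
  rw [hsum, ← sum_add_distrib, ← nsmul_eq_mul, ← sum_const]
  exact sum_congr rfl fun i hi => (((hK i).2 j).1 ((mem_filter_univ i).1 hi)).2.symm

end BlockStructure

theorem stmt_11_general {d k : ℕ} {S₀ : Matrix (Fin d) (Fin d) ℂ} (hS₀ : S₀.PosSemidef)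
    (a : Fin k → ℝ) (ha_pos : ∀ i, 0 < a i) (ha_mono : Antitone a)
    (f : ℝ → ℝ) (hf : StrictConvexOn ℝ (Set.Ici 0) f)
    (G : Fin k → Fin d → ℂ) (hG : ∀ i, normSqVec (G i) = a i)
    (hmin : IsPotentialMinimizer f S₀ G)
    (lam μ : Fin d → ℝ) (hlam : lam = eigsAsc S₀) (hμ : μ = eigsDesc (frameOp G))
    (sF : ℕ) (hsF : sF = (frameOp G).rank)
    (hsmu : ∀ i : Fin d, μ i ≠ 0 ↔ (i : ℕ) < sF)
    (p : ℕ) (c : Fin p → ℝ) (hcanti : StrictAnti c)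
    (hKcover : ∀ i : Fin d, (i : ℕ) < sF → ∃ j : Fin p, lam i + μ i = c j)
    (hKattain : ∀ j : Fin p, ∃ i : Fin d, (i : ℕ) < sF ∧ lam i + μ i = c j)
    (hJcover : ∀ l : Fin k, ∃ j : Fin p, (S₀ + frameOp G).mulVec (G l) = (c j : ℂ) • G l) :
    ∃ s : Fin (p + 1) → ℕ, s 0 = 0 ∧ StrictMono s ∧ s (Fin.last p) = sF ∧
      (∀ j : Fin p, ∀ i : Fin d, (i : ℕ) < sF →
        (lam i + μ i = c j ↔ s j.castSucc ≤ (i : ℕ) ∧ (i : ℕ) < s j.succ)) ∧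
      (∀ j : Fin p, ∀ l : Fin k,
        ((S₀ + frameOp G).mulVec (G l) = (c j : ℂ) • G l ↔
          s j.castSucc ≤ (l : ℕ) ∧ ((j : ℕ) + 1 < p → (l : ℕ) < s j.succ))) ∧
      (∀ i : Fin d, sF ≤ (i : ℕ) → lam i + μ i = lam i) ∧
      (∀ j : Fin p, (j : ℕ) + 1 < p → c j = initAvg lam a (s j.castSucc) (s j.succ)) ∧
      ∀ j : Fin p, (j : ℕ) + 1 = p → c j = finalAvg lam a (s j.castSucc) (s j.succ) := by
  subst hlam hμ
  obtain rfl : (fun l => normSqVec (G l)) = a := funext hG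
  have hG0 (l : Fin k) : G l ≠ 0 := normSqVec_pos_iff.1 (ha_pos l)
  have heigen (l : Fin k) : ∃ x : ℝ, (S₀ + frameOp G) *ᵥ G l = (x : ℂ) • G l :=
    (hJcover l).imp' c fun _ => id
  obtain ⟨K, hK⟩ := exists_isIndexOf (R := fun (i : Fin d) j => (i : ℕ) < sF ∧
    eigsAsc S₀ i + eigsDesc (frameOp G) i = c j) fun i j j' hj hj' =>
      hcanti.injective (hj.2.symm.trans hj'.2)
  obtain ⟨J, hJ⟩ := exists_isIndexOf (R := fun l j => (S₀ + frameOp G) *ᵥ G l = (c j : ℂ) • G l)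
    fun l j j' hj hj' => hcanti.injective
      (Complex.ofReal_inj.1 (smul_left_injective ℂ (hG0 l) (hj.symm.trans hj')))
  have hKmono := hmin.monotone_spectrumIndex hf hS₀ heigen hcanti hsmu hKcover hK
  have hJmono := hmin.monotone_vectorIndex hf hS₀ hJcover hG0 ha_mono hcanti hJ
  have hJlt (l : Fin k) : J l < p := hJ.lt_iff.2 (hJcover l)
  have hKlt (i : Fin d) : K i < p ↔ (i : ℕ) < sF :=
    hK.lt_iff.trans ⟨fun ⟨_, h⟩ => h.1, fun h => (hKcover i h).imp fun _ => And.intro h⟩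
  have hstart := blockStart_congr fun j =>
    hmin.card_filter_index_eq hf hS₀ heigen hG0 hcanti hsmu
      (fun j => (hKattain j).imp fun _ => And.right) hK hJ
  have hlast := blockStart_eq_of_lt_iff (hsF ▸ rank_le_height _) hKlt
  have hattain (j : Fin p) : ∃ i, K i = j := (hKattain j).imp fun i => ((hK i).2 j).2
  have hsum := hmin.card_mul_eq_sum_add_sum hf hS₀ heigen hsmu hK hJ
  refine ⟨fun j => blockStart K j, blockStart_zero K,
    Fin.strictMono_iff_lt_succ.2 fun j => blockStart_lt_succ (hattain j), hlast,
    fun j i hi => ?_, fun j l => ?_, fun i hi => ?_,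
    fun j hj => eq_initAvg_blockStart hKmono hJmono hstart hj (hattain j) (hsum j),
    fun j hj => eq_finalAvg_blockStart hKmono hJmono (fun l => (hJlt l).trans_eq hj.symm)
      (hstart j j.2) (hattain j) (hsum j)⟩
  · exact (and_iff_right hi).symm.trans (((hK i).2 j).symm.trans
      (eq_iff_blockStart_le_and_lt hKmono))
  · exact ((hJ l).2 j).symm.trans (eq_iff_blockStart_le_and_lt_of_congr hJmono hJlt hstart j.2)
  · rw [not_not.1 (mt (hsmu i).1 hi.not_gt), add_zero]

theorem stmt_11 {d n₀ k : ℕ} (hdk : d ≤ k)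
    (F₀ : Fin n₀ → Fin d → ℂ) (a : Fin k → ℝ)
    (ha_pos : ∀ i, 0 < a i) (ha_mono : Antitone a)
    (f : ℝ → ℝ) (hf : StrictConvexOn ℝ (Set.Ici 0) f) (hf0 : ∀ x ∈ Set.Ici (0 : ℝ), 0 ≤ f x)
    (G : Fin k → Fin d → ℂ) (hG : ∀ i, normSqVec (G i) = a i)
    (hmin : ∀ G' : Fin k → Fin d → ℂ, (∀ i, normSqVec (G' i) = a i) →
      potential f (frameOp F₀ + frameOp G) ≤ potential f (frameOp F₀ + frameOp G'))
    (lam μ : Fin d → ℝ) (hlam : lam = eigsAsc (frameOp F₀)) (hμ : μ = eigsDesc (frameOp G))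
    (sF : ℕ) (hsF : sF = (frameOp G).rank)
    (hsmu : ∀ i : Fin d, μ i ≠ 0 ↔ (i : ℕ) < sF)
    (p : ℕ) (hp : 0 < p) (c : Fin p → ℝ) (hcanti : StrictAnti c) (hcpos : ∀ j, 0 < c j)
    (hKcover : ∀ i : Fin d, (i : ℕ) < sF → ∃ j : Fin p, lam i + μ i = c j)
    (hKattain : ∀ j : Fin p, ∃ i : Fin d, (i : ℕ) < sF ∧ lam i + μ i = c j)
    (hJcover : ∀ l : Fin k, ∃ j : Fin p,
      (frameOp F₀ + frameOp G).mulVec (G l) = (c j : ℂ) • G l) :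
    ∃ s : Fin (p + 1) → ℕ, s 0 = 0 ∧ StrictMono s ∧ s (Fin.last p) = sF ∧
      (∀ j : Fin p, ∀ i : Fin d, (i : ℕ) < sF →
        (lam i + μ i = c j ↔ s j.castSucc ≤ (i : ℕ) ∧ (i : ℕ) < s j.succ)) ∧
      (∀ j : Fin p, ∀ l : Fin k,
        ((frameOp F₀ + frameOp G).mulVec (G l) = (c j : ℂ) • G l ↔
          s j.castSucc ≤ (l : ℕ) ∧ ((j : ℕ) + 1 < p → (l : ℕ) < s j.succ))) ∧
      (∀ i : Fin d, sF ≤ (i : ℕ) → lam i + μ i = lam i) ∧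
      (∀ j : Fin p, (j : ℕ) + 1 < p → c j = initAvg lam a (s j.castSucc) (s j.succ)) ∧
      c ⟨p - 1, by omega⟩ = finalAvg lam a (s ⟨p - 1, by omega⟩) sF := by
  obtain ⟨s, hzero, hmono, hlast, hK, hJ, htail, hinit, hfinal⟩ :=
    stmt_11_general (frameOp_posSemidef F₀) a ha_pos ha_mono f hf G hG
      (fun G' hG' => hmin G' fun l => (hG' l).trans (hG l)) lam μ hlam hμ sF hsF hsmu p c hcanti
      hKcover hKattain hJcover
  have hsucc : (⟨p - 1, by omega⟩ : Fin p).succ = Fin.last p := Fin.ext (Nat.sub_add_cancel hp)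
  have hend := hfinal ⟨p - 1, by omega⟩ (Nat.sub_add_cancel hp)
  rw [hsucc, hlast] at hend
  exact ⟨s, hzero, hmono, hlast, hK, hJ, htail, hinit, hend⟩
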